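/- Let γ ∈ (0, 1) with γ < n/2, set p = (n+2γ)/(n−2γ), and define C(n,γ) = 4^γ Γ(n/2+γ)/(π^{n/2} |Γ(−γ)|), so that the fractional Laplacian of a bounded smooth function φ is (−Δ)^γφ(x) = C(n,γ) lim_{ε→0⁺} ∫_{|y−x|>ε} (φ(x) − φ(y))/|x − y|^{n+2γ} dy. Suppose α > 0 is such that z₀(x) = α(1+|x|²)^{−(n−2γ)/2} satisfies (−Δ)^γ z₀ = z₀^p pointwise on ℝⁿ, and for μ > 0, ξ ∈ ℝⁿ set z_{μ,ξ}(x) = α(μ/(μ² + |x−ξ|²))^{(n−2γ)/2}. Then for every μ > 0 and ξ ∈ ℝⁿ, every bounded smooth function φ : ℝⁿ → ℝ satisfying the linearized equation (−Δ)^γ φ(x) = p z_{μ,ξ}(x)^{p−1} φ(x) pointwise (with the principal value defining (−Δ)^γφ(x) existing for every x) is a linear combination of the n+1 functions ∂_μ z_{μ,ξ} and ∂_{ξ_1} z_{μ,ξ}, …, ∂_{ξ_n} z_{μ,ξ}, i.e., there exist c₀, c₁, …, cₙ ∈ ℝ with φ = c₀ ∂_μ z_{μ,ξ} + Σ_{i=1}^n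 c_i ∂_{ξ_i} z_{μ,ξ}. -/

import Mathlib

open MeasureTheory Filter
open scoped Topology

noncomputable def z0 (n : ℕ) (γ α : ℝ) (y : EuclideanSpace ℝ (Fin n)) : ℝ :=
  α * (1 + ‖y‖ ^ 2) ^ (-(((n : ℝ) - 2 * γ) / 2))

noncomputable def zBubble (n : ℕ) (γ α : ℝ) (μ : ℝ) (ξ x : EuclideanSpace ℝ (Fin n)) : ℝ :=
  α * (μ / (μ ^ 2 + ‖x - ξ‖ ^ 2)) ^ (((n : ℝ) - 2 * γ) / 2)

/-- The truncated integral `∫_{|y - x| > ε} (φ(x) - φ(y)) / |x - y|^{n + 2γ} dy`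
whose limit as `ε → 0⁺`, multiplied by `C(n, γ)`, defines `(-Δ)^γ φ(x)` in the
principal value sense. -/
noncomputable def pvInt (n : ℕ) (γ : ℝ) (φ : EuclideanSpace ℝ (Fin n) → ℝ)
    (x : EuclideanSpace ℝ (Fin n)) (ε : ℝ) : ℝ :=
  ∫ y in {y : EuclideanSpace ℝ (Fin n) | ε < ‖y - x‖},
    (φ x - φ y) / ‖x - y‖ ^ ((n : ℝ) + 2 * γ)

/-- `C(n, γ) = 4^γ Γ(n/2 + γ) / (π^{n/2} |Γ(-γ)|)`. -/
noncomputable def fracLapConst (n : ℕ) (γ : ℝ) : ℝ :=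
  (4 : ℝ) ^ γ * Real.Gamma ((n : ℝ) / 2 + γ) /
    (Real.pi ^ ((n : ℝ) / 2) * |Real.Gamma (-γ)|)

section Kernel

variable {E : Type*} [NormedAddCommGroup E] [MeasurableSpace E]

/-- The kernel `k` cut off at distance `ε` from the origin. -/
noncomputable def truncKer (k : E → ℝ) (ε : ℝ) : E → ℝ :=
  {h : E | ε < ‖h‖}.indicator k

/-- The integral operator `φ ↦ ∫ k_ε(h) (φ(x) - φ(x-h)) dh` of the truncated kernel. -/
noncomputable def truncOp (μ : Measure E) (k : E → ℝ) (ε : ℝ) (φ : E → ℝ) (x : E) : ℝ :=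
  ∫ h, truncKer k ε h * (φ x - φ (x - h)) ∂μ

/-- A nonnegative even kernel integrable against `min 1 |h|²`. -/
structure IsLevyKernel (μ : Measure E) (k : E → ℝ) : Prop where
  nonneg : ∀ h, 0 ≤ k h
  even : ∀ h, k (-h) = k h
  measurable : Measurable k
  integrable : Integrable (fun h => min 1 (‖h‖ ^ 2) * k h) μ

variable {μ : Measure E} {k : E → ℝ}

lemma truncKer_nonneg (hk : IsLevyKernel μ k) (ε : ℝ) (h : E) : 0 ≤ truncKer k ε h :=
  Set.indicator_nonneg (fun _ _ => hk.nonneg _) _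

lemma truncKer_le (hk : IsLevyKernel μ k) (ε : ℝ) (h : E) : truncKer k ε h ≤ k h :=
  Set.indicator_le_self' (fun _ _ => hk.nonneg _) _

lemma truncKer_neg (hk : IsLevyKernel μ k) (ε : ℝ) (h : E) :
    truncKer k ε (-h) = truncKer k ε h := by
  simp [truncKer, Set.indicator_apply, hk.even]

variable [BorelSpace E]

lemma measurable_truncKer (hk : IsLevyKernel μ k) (ε : ℝ) : Measurable (truncKer k ε) :=
  hk.measurable.indicator (measurableSet_lt measurable_const measurable_norm)

lemma integrable_truncKer (hk : IsLevyKernel μ k) {ε : ℝ} (hε : 0 < ε) :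
    Integrable (truncKer k ε) μ := by
  refine (hk.integrable.const_mul (max 1 (ε ^ 2)⁻¹)).mono'
    (measurable_truncKer hk ε).aestronglyMeasurable (.of_forall fun h => ?_)
  rw [Real.norm_of_nonneg (truncKer_nonneg hk ε h), truncKer, Set.indicator_apply]
  have hm : 0 ≤ min 1 (‖h‖ ^ 2) * k h := mul_nonneg (by positivity) (hk.nonneg h)
  split_ifs with hh
  · have hh : ε < ‖h‖ := hh
    have h1 : 1 ≤ max 1 (ε ^ 2)⁻¹ * min 1 (‖h‖ ^ 2) := by
      rcases le_total 1 (‖h‖ ^ 2) with h2 | h2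
      · rw [min_eq_left h2, mul_one]; exact le_max_left _ _
      · rw [min_eq_right h2]
        calc (1 : ℝ) = (ε ^ 2)⁻¹ * ε ^ 2 := by field_simp
          _ ≤ _ := by gcongr; exact le_max_right _ _
    calc k h = 1 * k h := (one_mul _).symm
      _ ≤ _ := by rw [← mul_assoc]; exact mul_le_mul_of_nonneg_right h1 (hk.nonneg h)
  · positivity

lemma integrable_truncKer_mul (hk : IsLevyKernel μ k) {ε : ℝ} (hε : 0 < ε) {ψ : E → ℝ}
    (hψ : Continuous ψ) {B : ℝ} (hB : ∀ x, |ψ x| ≤ B) :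
    Integrable (fun h => truncKer k ε h * ψ h) μ :=
  (integrable_truncKer hk hε).mul_bdd hψ.aestronglyMeasurable (.of_forall hB)

lemma continuous_truncOp (hk : IsLevyKernel μ k) {ε : ℝ} (hε : 0 < ε) {φ : E → ℝ}
    (hφ : Continuous φ) {B : ℝ} (hB : ∀ x, |φ x| ≤ B) : Continuous (truncOp μ k ε φ) := by
  unfold truncOp
  refine continuous_of_dominated (bound := fun h => truncKer k ε h * (B + B)) (fun x => ?_)
    (fun x => .of_forall fun h => ?_) ((integrable_truncKer hk hε).mul_const _)
    (.of_forall fun h => by fun_prop)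
  · exact ((measurable_truncKer hk ε).mul (by fun_prop)).aestronglyMeasurable
  · rw [norm_mul, Real.norm_of_nonneg (truncKer_nonneg hk ε h)]
    exact mul_le_mul_of_nonneg_left ((abs_sub _ _).trans (add_le_add (hB _) (hB _)))
      (truncKer_nonneg hk ε h)

end Kernel

section SecondDifference

variable {E : Type*} [NormedAddCommGroup E] [NormedSpace ℝ E]

lemma ContDiff.exists_second_difference_le [FiniteDimensional ℝ E] {φ : E → ℝ}
    (hφ : ContDiff ℝ 2 φ) (r : ℝ) :
    ∃ C, 0 ≤ C ∧ ∀ x h : E, ‖x‖ ≤ r → ‖h‖ ≤ 1 →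
      |2 * φ x - φ (x + h) - φ (x - h)| ≤ C * ‖h‖ ^ 2 := by
  have hd : ContDiff ℝ 1 (fderiv ℝ φ) := hφ.fderiv_right (by norm_num)
  obtain ⟨K, hK⟩ := hd.contDiffOn.exists_lipschitzOnWith (by norm_num)
    (convex_closedBall (0 : E) (r + 1)) (isCompact_closedBall _ _)
  have hdiff : Differentiable ℝ φ := hφ.differentiable (by norm_num)
  have key : ∀ x h : E, ‖x‖ ≤ r → ‖h‖ ≤ 1 → |φ (x + h) - φ x - fderiv ℝ φ x h| ≤ K * ‖h‖ ^ 2 := by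
    intro x h hx hh
    have := (convex_closedBall x ‖h‖).norm_image_sub_le_of_norm_hasFDerivWithin_le' (f := φ)
      (f' := fun y => fderiv ℝ φ y) (φ := fderiv ℝ φ x) (C := K * ‖h‖) (x := x) (y := x + h)
      (fun y _ => (hdiff y).hasFDerivAt.hasFDerivWithinAt) (fun y hy => ?_) (by simp) (by simp)
    · simpa [pow_two, mul_assoc] using this
    · have hyx : ‖y - x‖ ≤ ‖h‖ := by simpa [dist_eq_norm] using hy
      refine (hK.norm_sub_le ?_ ?_).trans (by gcongr)
      · have := norm_add_le x (y - x)
        simp at this ⊢; linarith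
      · simp; linarith
  refine ⟨2 * K, by positivity, fun x h hx hh => ?_⟩
  have h1 := key x h hx hh
  have h2 := key x (-h) hx (by simpa using hh)
  simp only [norm_neg, map_neg, ← sub_eq_add_neg] at h2
  rw [abs_le] at *
  constructor <;> linarith

end SecondDifference

section Operator

variable {E : Type*} [NormedAddCommGroup E] [NormedSpace ℝ E] [FiniteDimensional ℝ E]
  [MeasurableSpace E] [BorelSpace E] {μ : Measure E} [μ.IsAddHaarMeasure] {k : E → ℝ}

lemma truncOp_eq_half (hk : IsLevyKernel μ k) {ε : ℝ} (hε : 0 < ε) {φ : E → ℝ}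
    (hφ : Continuous φ) {B : ℝ} (hB : ∀ x, |φ x| ≤ B) (x : E) :
    truncOp μ k ε φ x =
      (1 / 2) * ∫ h, truncKer k ε h * (2 * φ x - φ (x + h) - φ (x - h)) ∂μ := by
  have h1 : truncOp μ k ε φ x = ∫ h, truncKer k ε h * (φ x - φ (x + h)) ∂μ := by
    rw [truncOp, ← integral_neg_eq_self]
    simp [truncKer_neg hk]
  have hb : ∀ y, |φ x - φ y| ≤ B + B := fun y => (abs_sub _ _).trans (add_le_add (hB _) (hB _))
  have i1 := integrable_truncKer_mul hk hε (ψ := fun h => φ x - φ (x + h)) (by fun_prop)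
    (fun h => hb _)
  have i2 := integrable_truncKer_mul hk hε (ψ := fun h => φ x - φ (x - h)) (by fun_prop)
    (fun h => hb _)
  have h2 : ∫ h, truncKer k ε h * (2 * φ x - φ (x + h) - φ (x - h)) ∂μ
      = truncOp μ k ε φ x + ∫ h, truncKer k ε h * (φ x - φ (x + h)) ∂μ := by
    rw [truncOp, ← integral_add i2 i1]
    congr 1; ext h; ring
  rw [h2, ← h1]; ring

/-- Truncations of the operator are locally bounded, uniformly in `ε`. -/
lemma exists_abs_truncOp_le (hk : IsLevyKernel μ k) {φ : E → ℝ} (hφ : ContDiff ℝ 2 φ) {B : ℝ}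
    (hB : ∀ x, |φ x| ≤ B) (r : ℝ) :
    ∃ C, 0 ≤ C ∧ ∀ x : E, ‖x‖ ≤ r → ∀ ε, 0 < ε → |truncOp μ k ε φ x| ≤ C := by
  obtain ⟨C, hC0, hC⟩ := hφ.exists_second_difference_le r
  have hB0 : 0 ≤ B := (abs_nonneg _).trans (hB 0)
  refine ⟨(1 / 2) * ∫ h, (C + 4 * B) * (min 1 (‖h‖ ^ 2) * k h) ∂μ, ?_, fun x hx ε hε => ?_⟩
  · refine mul_nonneg (by norm_num) (integral_nonneg fun h => ?_)
    have := hk.nonneg h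
    positivity
  rw [truncOp_eq_half hk hε hφ.continuous hB, abs_mul, abs_of_pos (by norm_num : (0 : ℝ) < 1 / 2)]
  gcongr
  rw [← Real.norm_eq_abs]
  refine norm_integral_le_of_norm_le (hk.integrable.const_mul _) (.of_forall fun h => ?_)
  rw [norm_mul, Real.norm_of_nonneg (truncKer_nonneg hk ε h), mul_comm, ← mul_assoc]
  refine mul_le_mul ?_ (truncKer_le hk ε h) (truncKer_nonneg hk ε h) (by positivity)
  rw [Real.norm_eq_abs]
  rcases le_total ‖h‖ 1 with h1 | h1
  · rw [min_eq_right (by nlinarith [norm_nonneg h])]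
    refine (hC x h hx h1).trans ?_
    gcongr; linarith
  · rw [min_eq_left (by nlinarith [norm_nonneg h]), mul_one]
    have a1 := abs_le.1 (hB x)
    have a2 := abs_le.1 (hB (x + h))
    have a3 := abs_le.1 (hB (x - h))
    rw [abs_le]; constructor <;> linarith

end Operator

section Pairing

variable {E : Type*} [NormedAddCommGroup E] [NormedSpace ℝ E] [FiniteDimensional ℝ E]
  [MeasurableSpace E] [BorelSpace E] {μ : Measure E} [μ.IsAddHaarMeasure] {k : E → ℝ}

lemma integrable_mul_comp_sub {f g : E → ℝ} (hf : Integrable f μ) (hg : Integrable g μ) :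
    Integrable (fun p : E × E => f p.2 * g (p.1 - p.2)) (μ.prod μ) :=
  hf.convolution_integrand (ContinuousLinearMap.mul ℝ ℝ) hg

lemma integrable_integral_mul_comp_sub {f g : E → ℝ} (hf : Integrable f μ)
    (hg : Integrable g μ) : Integrable (fun x => ∫ u, f u * g (x - u) ∂μ) μ :=
  (integrable_mul_comp_sub hf hg).integral_prod_left

/-- Convolution with an even function is symmetric. -/
lemma integral_mul_convolution_comm {S w φ : E → ℝ} (hS : Integrable S μ)
    (hSe : ∀ u, S (-u) = S u) (hw : Integrable w μ) (hφ : Continuous φ) {B : ℝ}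
    (hB : ∀ x, |φ x| ≤ B) :
    ∫ x, w x * ∫ u, S u * φ (x - u) ∂μ ∂μ = ∫ x, φ x * ∫ u, S u * w (x - u) ∂μ ∂μ := by
  have i1 : Integrable (fun p : E × E => w p.1 * S p.2 * φ (p.1 - p.2)) (μ.prod μ) :=
    (hw.mul_prod hS).mul_bdd (by fun_prop) (.of_forall fun p => hB _)
  have i2 : Integrable (fun p : E × E => S p.2 * w (p.1 - p.2) * φ p.1) (μ.prod μ) :=
    (integrable_mul_comp_sub hS hw).mul_bdd (by fun_prop) (.of_forall fun p => hB _)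
  calc ∫ x, w x * ∫ u, S u * φ (x - u) ∂μ ∂μ
      = ∫ x, ∫ u, w x * S u * φ (x - u) ∂μ ∂μ := by
        simp_rw [← integral_const_mul, mul_assoc]
    _ = ∫ u, ∫ x, w x * S u * φ (x - u) ∂μ ∂μ := integral_integral_swap i1
    _ = ∫ u, ∫ x, w (x + u) * S u * φ x ∂μ ∂μ := by
        congr 1; ext u
        rw [← integral_add_right_eq_self _ u]; simp
    _ = ∫ u, ∫ x, S u * w (x - u) * φ x ∂μ ∂μ := by
        rw [← integral_neg_eq_self]
        simp only [hSe, ← sub_eq_add_neg, mul_comm (S _)]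
    _ = ∫ x, ∫ u, S u * w (x - u) * φ x ∂μ ∂μ := (integral_integral_swap i2).symm
    _ = _ := by simp_rw [integral_mul_const, mul_comm]

lemma truncOp_neg (hk : IsLevyKernel μ k) {ρ : E → ℝ} (hρe : ∀ u, ρ (-u) = ρ u) (ε : ℝ) (x : E) :
    truncOp μ k ε ρ (-x) = truncOp μ k ε ρ x := by
  rw [truncOp, truncOp, ← integral_neg_eq_self]
  congr 1; ext h
  rw [truncKer_neg hk, hρe, ← hρe (x - h)]
  congr 3; abel

/-- The truncated operator commutes with convolutions. -/
lemma integral_truncOp_mul (hk : IsLevyKernel μ k) {ε : ℝ} (hε : 0 < ε) {ρ φ : E → ℝ}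
    (hρ : Integrable ρ μ) (hφ : Continuous φ) {B : ℝ} (hB : ∀ x, |φ x| ≤ B) (x : E) :
    ∫ u, truncOp μ k ε ρ u * φ (x - u) ∂μ = ∫ u, ρ u * truncOp μ k ε φ (x - u) ∂μ := by
  have hK := integrable_truncKer hk hε
  have i1 : Integrable (fun p : E × E => truncKer k ε p.2 * ρ (p.1 - p.2) * φ (x - p.1))
      (μ.prod μ) :=
    (integrable_mul_comp_sub hK hρ).mul_bdd (by fun_prop) (.of_forall fun p => hB _)
  have i2 : Integrable (fun p : E × E => ρ p.1 * truncKer k ε p.2 * φ (x - p.1 - p.2))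
      (μ.prod μ) :=
    (hρ.mul_prod hK).mul_bdd (by fun_prop) (.of_forall fun p => hB _)
  have i3 : Integrable (fun p : E × E => ρ p.1 * truncKer k ε p.2 * φ (x - p.1)) (μ.prod μ) :=
    (hρ.mul_prod hK).mul_bdd (by fun_prop) (.of_forall fun p => hB _)
  have e1 : ∫ u, truncOp μ k ε ρ u * φ (x - u) ∂μ =
      ∫ u, ∫ h, (ρ u * truncKer k ε h * φ (x - u) -
        truncKer k ε h * ρ (u - h) * φ (x - u)) ∂μ ∂μ := by
    congr 1; ext u
    rw [truncOp, ← integral_mul_const]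
    congr 1; ext h; ring
  have e2 : ∫ u, ρ u * truncOp μ k ε φ (x - u) ∂μ =
      ∫ u, ∫ h, (ρ u * truncKer k ε h * φ (x - u) -
        ρ u * truncKer k ε h * φ (x - u - h)) ∂μ ∂μ := by
    congr 1; ext u
    rw [truncOp, ← integral_const_mul]
    congr 1; ext h; ring
  rw [e1.trans (integral_integral_swap (i3.sub i1)),
    e2.trans (integral_integral_swap (i3.sub i2))]
  have hsec : ∀ ψ : E → ℝ, Continuous ψ → (∀ y, |ψ y| ≤ B) → ∀ ρ' : E → ℝ, Integrable ρ' μ →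
      ∀ c : ℝ, Integrable (fun u => ρ' u * c * ψ u) μ := fun ψ hc hb ρ' hρ' c =>
    (hρ'.mul_const c).mul_bdd hc.aestronglyMeasurable (.of_forall hb)
  congr 1; ext h
  have j3 := hsec (fun u => φ (x - u)) (by fun_prop) (fun _ => hB _) ρ hρ (truncKer k ε h)
  have j2 := hsec (fun u => φ (x - u - h)) (by fun_prop) (fun _ => hB _) ρ hρ (truncKer k ε h)
  have j1 := hsec (fun u => φ (x - u)) (by fun_prop) (fun _ => hB _) _ (hρ.comp_sub_right h)
    (truncKer k ε h)
  simp_rw [mul_comm (truncKer k ε h) (ρ _)]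
  rw [integral_sub j3 j1, integral_sub j3 j2]
  congr 1
  rw [← integral_add_right_eq_self _ h]
  congr 1; ext u
  rw [add_sub_cancel_right, sub_add_eq_sub_sub]

/-- For compactly supported `ρ`, the truncations `truncOp μ k ε ρ` are dominated by an integrable
function independent of `ε`. -/
lemma exists_integrable_bound_truncOp (hk : IsLevyKernel μ k) {ρ : E → ℝ} (hρ : ContDiff ℝ 2 ρ)
    (hρc : HasCompactSupport ρ) :
    ∃ H : E → ℝ, Integrable H μ ∧ ∀ x ε, 0 < ε → |truncOp μ k ε ρ x| ≤ H x := by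
  obtain ⟨B, hB⟩ := hρc.exists_bound_of_continuous hρ.continuous
  obtain ⟨r, hr⟩ := hρc.isCompact.isBounded.subset_closedBall 0
  have hr0 : ∀ x, r < ‖x‖ → ρ x = 0 := fun x hx => by
    by_contra h
    have := hr (subset_tsupport _ h)
    simp at this; linarith
  obtain ⟨C, hC0, hC⟩ := exists_abs_truncOp_le hk hρ hB (r + 1)
  have hρi : Integrable (fun x => |ρ x|) μ := (hρ.continuous.integrable_of_hasCompactSupport hρc).abs
  refine ⟨fun x => (Metric.closedBall (0 : E) (r + 1)).indicator (fun _ => C) x +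
    ∫ h, min 1 (‖h‖ ^ 2) * k h * |ρ (x - h)| ∂μ, ?_, fun x ε hε => ?_⟩
  · refine Integrable.add ?_ (integrable_integral_mul_comp_sub hk.integrable hρi)
    exact (integrable_indicator_iff measurableSet_closedBall).2
      (integrableOn_const (measure_closedBall_lt_top).ne)
  have hJ : ∀ h, 0 ≤ min 1 (‖h‖ ^ 2) * k h := fun h => mul_nonneg (by positivity) (hk.nonneg h)
  have hnn : 0 ≤ ∫ h, min 1 (‖h‖ ^ 2) * k h * |ρ (x - h)| ∂μ :=
    integral_nonneg fun h => mul_nonneg (hJ h) (abs_nonneg _)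
  beta_reduce
  by_cases hx : ‖x‖ ≤ r + 1
  · rw [Set.indicator_of_mem (by simpa using hx)]
    linarith [hC x hx ε hε]
  · rw [Set.indicator_of_notMem (by simpa using hx), zero_add, ← Real.norm_eq_abs]
    push Not at hx
    refine norm_integral_le_of_norm_le (hk.integrable.mul_bdd (c := B) (by fun_prop)
      (.of_forall fun h => by simpa using hB _)) (.of_forall fun h => ?_)
    rw [hr0 x (by linarith), zero_sub, norm_mul, norm_neg, Real.norm_eq_abs (ρ _),
      Real.norm_of_nonneg (truncKer_nonneg hk ε h)]
    by_cases hh : ‖h‖ ≤ 1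
    · have : r < ‖x - h‖ := by linarith [norm_sub_norm_le x h]
      simp [hr0 _ this]
    · push Not at hh
      rw [min_eq_left (by nlinarith), one_mul]
      exact mul_le_mul_of_nonneg_right (truncKer_le hk ε h) (abs_nonneg _)

lemma tendsto_integral_mul_truncOp (hk : IsLevyKernel μ k) {ρ φ f : E → ℝ} (hρ : Continuous ρ)
    (hρc : HasCompactSupport ρ) (hφ : ContDiff ℝ 2 φ) {B : ℝ} (hB : ∀ x, |φ x| ≤ B)
    (hf : ∀ x, Tendsto (fun ε => truncOp μ k ε φ x) (𝓝[>] 0) (𝓝 (f x))) (x : E) :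
    Tendsto (fun ε => ∫ u, ρ u * truncOp μ k ε φ (x - u) ∂μ) (𝓝[>] 0)
      (𝓝 (∫ u, ρ u * f (x - u) ∂μ)) := by
  obtain ⟨r, hr⟩ := hρc.isCompact.isBounded.subset_closedBall 0
  obtain ⟨C, hC0, hC⟩ := exists_abs_truncOp_le hk hφ hB (‖x‖ + r)
  refine tendsto_integral_filter_of_dominated_convergence (fun u => |ρ u| * C) ?_ ?_
    ((hρ.integrable_of_hasCompactSupport hρc).abs.mul_const C)
    (.of_forall fun u => (hf _).const_mul _)
  · filter_upwards [self_mem_nhdsWithin] with ε hε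
    have := continuous_truncOp hk hε hφ.continuous hB
    exact (by fun_prop : Continuous _).aestronglyMeasurable
  · filter_upwards [self_mem_nhdsWithin] with ε hε
    refine .of_forall fun u => ?_
    rw [norm_mul, Real.norm_eq_abs, Real.norm_eq_abs]
    by_cases hu : ρ u = 0
    · simp [hu]
    · have := hr (subset_tsupport _ hu)
      gcongr
      refine hC _ ((norm_sub_le _ _).trans ?_) ε hε
      simp at this; linarith

lemma integral_convolution_pairing (hk : IsLevyKernel μ k) {ρ φ f w g : E → ℝ}
    (hρ : ContDiff ℝ 2 ρ) (hρc : HasCompactSupport ρ) (hρe : ∀ u, ρ (-u) = ρ u)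
    (hφ : ContDiff ℝ 2 φ) {B : ℝ} (hB : ∀ x, |φ x| ≤ B)
    (hf : ∀ x, Tendsto (fun ε => truncOp μ k ε φ x) (𝓝[>] 0) (𝓝 (f x)))
    (hw : ContDiff ℝ 2 w) {B' : ℝ} (hB' : ∀ x, |w x| ≤ B') (hwi : Integrable w μ)
    (hg : ∀ x, Tendsto (fun ε => truncOp μ k ε w x) (𝓝[>] 0) (𝓝 (g x)))
    (hgi : Integrable g μ) :
    ∫ x, w x * ∫ u, ρ u * f (x - u) ∂μ ∂μ = ∫ x, g x * ∫ u, ρ u * φ (x - u) ∂μ ∂μ := by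
  obtain ⟨H, hHi, hH⟩ := exists_integrable_bound_truncOp hk hρ hρc
  have hρi := hρ.continuous.integrable_of_hasCompactSupport hρc (μ := μ)
  obtain ⟨Bρ, hBρ⟩ := hρc.exists_bound_of_continuous hρ.continuous
  have hSc : ∀ ε, 0 < ε → Continuous (truncOp μ k ε ρ) := fun ε hε =>
    continuous_truncOp hk hε hρ.continuous hBρ
  have hSi : ∀ ε, 0 < ε → Integrable (truncOp μ k ε ρ) μ := fun ε hε =>
    hHi.mono' (hSc ε hε).aestronglyMeasurable (.of_forall fun x => hH x ε hε)
  have hH0 : ∀ x, 0 ≤ H x := fun x => (abs_nonneg _).trans (hH x 1 one_pos)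
  have t1 : Tendsto (fun ε => ∫ x, w x * ∫ u, truncOp μ k ε ρ u * φ (x - u) ∂μ ∂μ) (𝓝[>] 0)
      (𝓝 (∫ x, w x * ∫ u, ρ u * f (x - u) ∂μ ∂μ)) := by
    refine tendsto_integral_filter_of_dominated_convergence (fun x => |w x| * ∫ u, H u * B ∂μ) ?_ ?_
      (hwi.abs.mul_const _) (.of_forall fun x => Tendsto.const_mul _ ?_)
    · filter_upwards [self_mem_nhdsWithin] with ε hε
      exact (((hwi.mul_prod (hSi ε hε)).mul_bdd (g := fun p : E × E => φ (p.1 - p.2)) (by fun_prop)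
        (.of_forall fun p => hB _)).integral_prod_left.aestronglyMeasurable).congr
        (.of_forall fun x => by simp only [mul_assoc, integral_const_mul])
    · filter_upwards [self_mem_nhdsWithin] with ε hε
      refine .of_forall fun x => ?_
      rw [norm_mul, Real.norm_eq_abs]
      gcongr
      refine norm_integral_le_of_norm_le (hHi.mul_const _) (.of_forall fun u => ?_)
      rw [norm_mul]
      exact mul_le_mul (hH u ε hε) (hB _) (norm_nonneg _) (hH0 u)
    · refine (tendsto_integral_mul_truncOp hk hρ.continuous hρc hφ hB hf x).congr' ?_
      filter_upwards [self_mem_nhdsWithin] with ε hε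
      exact (integral_truncOp_mul hk hε hρi hφ.continuous hB x).symm
  have t2 : Tendsto (fun ε => ∫ x, φ x * ∫ u, truncOp μ k ε ρ u * w (x - u) ∂μ ∂μ) (𝓝[>] 0)
      (𝓝 (∫ x, φ x * ∫ u, ρ u * g (x - u) ∂μ ∂μ)) := by
    refine tendsto_integral_filter_of_dominated_convergence
      (fun x => B * ∫ u, H u * |w (x - u)| ∂μ) ?_ ?_
      ((integrable_integral_mul_comp_sub hHi hwi.abs).const_mul _)
      (.of_forall fun x => Tendsto.const_mul _ ?_)
    · filter_upwards [self_mem_nhdsWithin] with ε hε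
      exact hφ.continuous.aestronglyMeasurable.mul
        (integrable_integral_mul_comp_sub (hSi ε hε) hwi).aestronglyMeasurable
    · filter_upwards [self_mem_nhdsWithin] with ε hε
      refine .of_forall fun x => ?_
      rw [norm_mul]
      have hB0 : 0 ≤ B := (abs_nonneg _).trans (hB 0)
      refine mul_le_mul (hB x) ?_ (norm_nonneg _) hB0
      refine norm_integral_le_of_norm_le (hHi.mul_bdd (c := B')
        (by have := hw.continuous; fun_prop)
        (.of_forall fun h => by simpa using hB' _)) (.of_forall fun u => ?_)
      rw [norm_mul, Real.norm_eq_abs (w _)]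
      exact mul_le_mul_of_nonneg_right (hH u ε hε) (abs_nonneg _)
    · refine (tendsto_integral_mul_truncOp hk hρ.continuous hρc hw hB' hg x).congr' ?_
      filter_upwards [self_mem_nhdsWithin] with ε hε
      exact (integral_truncOp_mul hk hε hρi hw.continuous hB' x).symm
  rw [integral_mul_convolution_comm hρi hρe hgi hφ.continuous hB]
  refine tendsto_nhds_unique t1 (t2.congr' ?_)
  filter_upwards [self_mem_nhdsWithin] with ε hε
  exact (integral_mul_convolution_comm (hSi ε hε) (fun u => truncOp_neg hk hρe ε u) hwi
    hφ.continuous hB).symm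

lemma tendsto_integral_mul_bump [HasContDiffBump E] (b : ℕ → ContDiffBump (0 : E))
    (hb : Tendsto (fun i => (b i).rOut) atTop (𝓝 0)) {w f : E → ℝ} (hw : Integrable w μ)
    (hf : Continuous f) {B : ℝ} (hB : ∀ x, |f x| ≤ B) :
    Tendsto (fun i => ∫ x, w x * ∫ u, (b i).normed μ u * f (x - u) ∂μ ∂μ) atTop
      (𝓝 (∫ x, w x * f x ∂μ)) := by
  refine tendsto_integral_of_dominated_convergence (fun x => |w x| * B) (fun i => ?_)
    (hw.abs.mul_const _) (fun i => .of_forall fun x => ?_)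
    (.of_forall fun x => Tendsto.const_mul _ ?_)
  · exact (((hw.mul_prod ((b i).integrable_normed (μ := μ))).mul_bdd (g := fun p : E × E => f (p.1 - p.2))
      (by fun_prop) (.of_forall fun p => hB _)).integral_prod_left.aestronglyMeasurable).congr
        (.of_forall fun x => by simp only [mul_assoc, integral_const_mul])
  · rw [norm_mul, Real.norm_eq_abs]
    gcongr
    refine (norm_integral_le_of_norm_le ((b i).integrable_normed.mul_const B)
      (.of_forall fun u => ?_)).trans_eq (by rw [integral_mul_const, (b i).integral_normed, one_mul])
    rw [norm_mul, Real.norm_of_nonneg ((b i).nonneg_normed u)]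
    exact mul_le_mul_of_nonneg_left (hB _) ((b i).nonneg_normed u)
  · exact ContDiffBump.convolution_tendsto_right_of_continuous hb hf x

/-- Symmetry of the operator `φ ↦ lim truncOp μ k ε φ`. -/
theorem integral_pairing (hk : IsLevyKernel μ k) {φ f w g : E → ℝ}
    (hφ : ContDiff ℝ 2 φ) {B : ℝ} (hB : ∀ x, |φ x| ≤ B)
    (hf : ∀ x, Tendsto (fun ε => truncOp μ k ε φ x) (𝓝[>] 0) (𝓝 (f x)))
    (hfc : Continuous f) {Bf : ℝ} (hBf : ∀ x, |f x| ≤ Bf)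
    (hw : ContDiff ℝ 2 w) {B' : ℝ} (hB' : ∀ x, |w x| ≤ B') (hwi : Integrable w μ)
    (hg : ∀ x, Tendsto (fun ε => truncOp μ k ε w x) (𝓝[>] 0) (𝓝 (g x)))
    (hgi : Integrable g μ) :
    ∫ x, w x * f x ∂μ = ∫ x, g x * φ x ∂μ := by
  let b : ℕ → ContDiffBump (0 : E) := fun i =>
    ⟨1 / (2 * (i + 1)), 1 / (i + 1), by positivity, by gcongr; linarith⟩
  have hb : Tendsto (fun i => (b i).rOut) atTop (𝓝 0) := tendsto_one_div_add_atTop_nhds_zero_nat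
  refine tendsto_nhds_unique (tendsto_integral_mul_bump b hb hwi hfc hBf)
    ((tendsto_integral_mul_bump b hb hgi hφ.continuous hB).congr fun i => ?_)
  exact (integral_convolution_pairing hk (b i).contDiff_normed (b i).hasCompactSupport_normed
    (b i).normed_neg hφ hB hf hw hB' hwi hg hgi).symm

end Pairing

section FractionalLaplacian

variable {n : ℕ} {γ : ℝ}

/-- The kernel `|h|^{-(n+2γ)}` of the fractional Laplacian on `ℝⁿ`. -/
noncomputable def fracKer (n : ℕ) (γ : ℝ) (h : EuclideanSpace ℝ (Fin n)) : ℝ :=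
  (‖h‖ ^ ((n : ℝ) + 2 * γ))⁻¹

lemma isLevyKernel_fracKer (hn : 1 ≤ n) (hγ0 : 0 < γ) (hγ1 : γ < 1) :
    IsLevyKernel volume (fracKer n γ) where
  nonneg h := by unfold fracKer; positivity
  even h := by simp [fracKer]
  measurable := by unfold fracKer; fun_prop
  integrable := by
    have : NeZero n := ⟨by omega⟩
    have hs : Set.Ioi (0 : ℝ) = Set.Ioc 0 1 ∪ Set.Ioi 1 := by simp
    refine (integrable_fun_norm_addHaar (volume : Measure (EuclideanSpace ℝ (Fin n)))
      (f := fun r => min 1 (r ^ 2) * (r ^ ((n : ℝ) + 2 * γ))⁻¹)).2 ?_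
    have hpow : ∀ r : ℝ, 0 < r → r ^ (n - 1) * (r ^ ((n : ℝ) + 2 * γ))⁻¹ = r ^ (-1 - 2 * γ) := by
      intro r hr
      rw [← Real.rpow_natCast, ← Real.rpow_neg hr.le, ← Real.rpow_add hr]
      congr 1; push_cast [hn]; ring
    rw [hs, integrableOn_union]
    simp only [finrank_euclideanSpace, Fintype.card_fin, smul_eq_mul]
    constructor
    · have h1 : IntegrableOn (fun r : ℝ => r ^ (1 - 2 * γ)) (Set.Ioc 0 1) :=
        (intervalIntegrable_iff_integrableOn_Ioc_of_le zero_le_one).1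
          (intervalIntegral.intervalIntegrable_rpow' (by linarith))
      refine h1.congr_fun (fun r hr => ?_) measurableSet_Ioc
      have hr0 : 0 < r := hr.1
      have : r ^ 2 ≤ 1 := by nlinarith [hr.2]
      simp only [min_eq_right this]
      rw [mul_left_comm, hpow r hr0, ← Real.rpow_natCast r 2, ← Real.rpow_add hr0]
      congr 1; push_cast; ring
    · refine (integrableOn_Ioi_rpow_of_lt (a := -1 - 2 * γ) (by linarith) one_pos).congr_fun
        (fun r hr => ?_) measurableSet_Ioi
      have hr1 : 1 < r := hr
      have : 1 ≤ r ^ 2 := by nlinarith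
      simp only [min_eq_left this, one_mul]
      rw [hpow r (by linarith)]

lemma pvInt_eq_truncOp (φ : EuclideanSpace ℝ (Fin n) → ℝ) (x : EuclideanSpace ℝ (Fin n)) (ε : ℝ) :
    pvInt n γ φ x ε = truncOp volume (fracKer n γ) ε φ x := by
  have hm : MeasurableSet {y : EuclideanSpace ℝ (Fin n) | ε < ‖y - x‖} :=
    measurableSet_lt measurable_const (by fun_prop)
  rw [pvInt, ← integral_indicator hm, truncOp, ← integral_sub_left_eq_self _ _ x]
  congr 1; ext h
  by_cases hh : ε < ‖h‖ <;>
    simp [truncKer, fracKer, hh, div_eq_inv_mul]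

/-- The principal value of `∫ (φ(x) - φ(y)) |x - y|^{-(n+2γ)} dy` exists and is `f x`
for every `x`. -/
def HasPV (n : ℕ) (γ : ℝ) (φ f : EuclideanSpace ℝ (Fin n) → ℝ) : Prop :=
  ∀ x, Tendsto (fun ε => truncOp volume (fracKer n γ) ε φ x) (𝓝[>] 0) (𝓝 (f x))

lemma HasPV.const_mul {φ f : EuclideanSpace ℝ (Fin n) → ℝ} (h : HasPV n γ φ f) (c : ℝ) :
    HasPV n γ (fun x => c * φ x) (fun x => c * f x) := fun x => by
  refine ((h x).const_mul c).congr fun ε => ?_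
  rw [truncOp, truncOp, ← integral_const_mul]
  congr 1; ext; ring

lemma HasPV.add (hn : 1 ≤ n) (hγ0 : 0 < γ) (hγ1 : γ < 1)
    {φ f ψ g : EuclideanSpace ℝ (Fin n) → ℝ} (h : HasPV n γ φ f) (h' : HasPV n γ ψ g)
    (hφ : Continuous φ) (hψ : Continuous ψ) {B B' : ℝ} (hB : ∀ x, |φ x| ≤ B)
    (hB' : ∀ x, |ψ x| ≤ B') :
    HasPV n γ (fun x => φ x + ψ x) (fun x => f x + g x) := fun x => by
  refine ((h x).add (h' x)).congr' ?_
  filter_upwards [self_mem_nhdsWithin] with ε hε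
  have hk := isLevyKernel_fracKer hn hγ0 hγ1
  rw [truncOp, truncOp, truncOp, ← integral_add]
  · congr 1; ext; ring
  · exact integrable_truncKer_mul hk hε (by fun_prop)
      (fun _ => (abs_sub _ _).trans (add_le_add (hB _) (hB _)))
  · exact integrable_truncKer_mul hk hε (by fun_prop)
      (fun _ => (abs_sub _ _).trans (add_le_add (hB' _) (hB' _)))

lemma truncOp_comp_affine (φ : EuclideanSpace ℝ (Fin n) → ℝ) {r : ℝ} (hr : 0 < r)
    (ξ x : EuclideanSpace ℝ (Fin n)) (ε : ℝ) :
    truncOp volume (fracKer n γ) ε (fun x => φ (r • (x - ξ))) x =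
      r ^ (2 * γ) * truncOp volume (fracKer n γ) (r * ε) φ (r • (x - ξ)) := by
  have hcov := Measure.integral_comp_smul (volume : Measure (EuclideanSpace ℝ (Fin n)))
    (fun h => truncKer (fracKer n γ) (r * ε) h * (φ (r • (x - ξ)) - φ (r • (x - ξ) - h))) r
  rw [finrank_euclideanSpace, Fintype.card_fin, abs_of_pos (by positivity), smul_eq_mul,
    eq_inv_mul_iff_mul_eq₀ (by positivity)] at hcov
  rw [truncOp, truncOp, ← hcov, ← mul_assoc, ← integral_const_mul]
  congr 1; ext h
  have e1 : r • (x - h - ξ) = r • (x - ξ) - r • h := by rw [← smul_sub]; congr 1; abel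
  have e2 : truncKer (fracKer n γ) ε h =
      r ^ (2 * γ) * r ^ n * truncKer (fracKer n γ) (r * ε) (r • h) := by
    simp only [truncKer, Set.indicator_apply, Set.mem_ofPred_eq, norm_smul, Real.norm_eq_abs,
      abs_of_pos hr, mul_lt_mul_iff_right₀ hr, fracKer]
    split_ifs
    · rw [Real.mul_rpow hr.le (norm_nonneg _), ← Real.rpow_natCast, ← Real.rpow_add hr,
        mul_inv, add_comm (2 * γ), mul_inv_cancel_left₀ (by positivity)]
    · simp
  simp only [e1, e2]; ring

lemma HasPV.comp_affine {φ f : EuclideanSpace ℝ (Fin n) → ℝ} (h : HasPV n γ φ f) {r : ℝ}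
    (hr : 0 < r) (ξ : EuclideanSpace ℝ (Fin n)) :
    HasPV n γ (fun x => φ (r • (x - ξ))) (fun x => r ^ (2 * γ) * f (r • (x - ξ))) := fun x => by
  simp only [truncOp_comp_affine φ hr]
  refine ((h _).comp ?_).const_mul _
  refine tendsto_nhdsWithin_iff.2 ⟨?_, ?_⟩
  · have : Tendsto (fun ε : ℝ => r * ε) (𝓝 0) (𝓝 0) := by
      simpa using (continuous_const_mul r).tendsto 0
    exact this.mono_left nhdsWithin_le_nhds
  · filter_upwards [self_mem_nhdsWithin] with ε hε
    exact mul_pos hr hε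

/-- The quadratic polynomial `a|x|² + 2⟨b,x⟩ + c`. -/
noncomputable def quad (a : ℝ) (b : EuclideanSpace ℝ (Fin n)) (c : ℝ)
    (x : EuclideanSpace ℝ (Fin n)) : ℝ :=
  a * ‖x‖ ^ 2 + 2 * inner ℝ b x + c

lemma continuous_quad (a : ℝ) (b : EuclideanSpace ℝ (Fin n)) (c : ℝ) :
    Continuous (quad a b c) := by unfold quad; fun_prop

lemma contDiff_quad (a : ℝ) (b : EuclideanSpace ℝ (Fin n)) (c : ℝ) :
    ContDiff ℝ (⊤ : ℕ∞) (quad a b c) := by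
  unfold quad
  exact ((contDiff_const.mul (contDiff_norm_sq ℝ)).add
    (contDiff_const.mul (contDiff_const.inner ℝ contDiff_id))).add contDiff_const

lemma quad_eq {a : ℝ} (ha : 0 < a) (b : EuclideanSpace ℝ (Fin n)) {c : ℝ}
    (hD : 0 < a * c - ‖b‖ ^ 2) (x : EuclideanSpace ℝ (Fin n)) :
    quad a b c x = (a * c - ‖b‖ ^ 2) / a *
      (1 + ‖(a / √(a * c - ‖b‖ ^ 2)) • (x - (-a⁻¹) • b)‖ ^ 2) := by
  have h1 : ‖x - (-a⁻¹) • b‖ ^ 2 = ‖x‖ ^ 2 + 2 * a⁻¹ * inner ℝ b x + (a⁻¹) ^ 2 * ‖b‖ ^ 2 := by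
    rw [neg_smul, sub_neg_eq_add, norm_add_sq_real, inner_smul_right, real_inner_comm, norm_smul,
      mul_pow, Real.norm_eq_abs, sq_abs]
    ring
  rw [norm_smul, mul_pow, h1, Real.norm_eq_abs, sq_abs, div_pow, Real.sq_sqrt hD.le, quad]
  field_simp
  ring

/-- The fractional Laplacian of all bubbles, deduced from the one of the standard bubble. -/
lemma HasPV.quad_rpow {s κ : ℝ}
    (h : HasPV n γ (fun x => (1 + ‖x‖ ^ 2) ^ (-s)) (fun x => κ * (1 + ‖x‖ ^ 2) ^ (-(s + 2 * γ))))
    {a : ℝ} (ha : 0 < a) (b : EuclideanSpace ℝ (Fin n)) {c : ℝ} (hD : 0 < a * c - ‖b‖ ^ 2) :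
    HasPV n γ (fun x => quad a b c x ^ (-s))
      (fun x => κ * ((a * c - ‖b‖ ^ 2) ^ γ * quad a b c x ^ (-(s + 2 * γ)))) := by
  set D := a * c - ‖b‖ ^ 2 with hDdef
  have hDa : 0 < D / a := by positivity
  have hr : 0 < a / √D := by positivity
  convert (h.comp_affine hr ((-a⁻¹) • b)).const_mul ((D / a) ^ (-s)) using 2 with x x
  · rw [quad_eq ha b hD, Real.mul_rpow hDa.le (by positivity)]
  · rw [quad_eq ha b hD, Real.mul_rpow hDa.le (by positivity)]
    have : D ^ γ * (D / a) ^ (-(s + 2 * γ)) = (D / a) ^ (-s) * (a / √D) ^ (2 * γ) := by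
      rw [neg_add, Real.rpow_add hDa, Real.div_rpow ha.le (by positivity), Real.sqrt_eq_rpow,
        ← Real.rpow_mul hD.le, Real.div_rpow hD.le ha.le (-(2 * γ)), Real.rpow_neg ha.le,
        Real.rpow_neg hD.le, show 1 / 2 * (2 * γ) = γ by ring,
        show D ^ (2 * γ) = D ^ γ * D ^ γ by rw [← Real.rpow_add hD]; ring_nf]
      field_simp
    linear_combination κ * (1 + ‖(a / √D) • (x - (-a⁻¹) • b)‖ ^ 2) ^ (-(s + 2 * γ)) * this

end FractionalLaplacian

section Binomial

lemma Ring.choose_neg_succ_mul (s : ℝ) (k : ℕ) :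
    Ring.choose (-s) (k + 1) * (k + 1) = -(s + k) * Ring.choose (-s) k := by
  have h : ∀ j : ℕ, (Nat.factorial j : ℝ) * Ring.choose (-s) j = (descPochhammer ℤ j).smeval (-s) :=
    fun j => by rw [Ring.descPochhammer_eq_factorial_smul_choose, nsmul_eq_mul]
  have h1 := h (k + 1)
  rw [descPochhammer_succ_right, Polynomial.smeval_mul, ← h k, Nat.factorial_succ] at h1
  simp [Polynomial.smeval_natCast] at h1
  have : (Nat.factorial k : ℝ) ≠ 0 := by positivity
  apply mul_left_cancel₀ this
  linear_combination h1

lemma Ring.choose_neg_pos {s : ℝ} (hs : 0 < s) (k : ℕ) : 0 < (-1) ^ k * Ring.choose (-s) k := by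
  induction k with
  | zero => simp
  | succ k ih =>
    have := Ring.choose_neg_succ_mul s k
    have h2 : (-1) ^ (k + 1) * Ring.choose (-s) (k + 1) * (k + 1) =
        (s + k) * ((-1) ^ k * Ring.choose (-s) k) := by
      rw [pow_succ]; linear_combination -(-1) ^ k * this
    have h3 : 0 < (s + k) * ((-1) ^ k * Ring.choose (-s) k) := by positivity
    rw [← h2] at h3
    exact pos_of_mul_pos_left h3 (by positivity)

lemma Ring.mul_choose_neg_ne {s r : ℝ} (hs : 0 < s) (hr : s < r) {k : ℕ} (hk : 2 ≤ k) :
    s * Ring.choose (-r) k ≠ r * Ring.choose (-s) k := by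
  have step : ∀ (t : ℝ) (k : ℕ), (-1) ^ (k + 1) * Ring.choose (-t) (k + 1) * (k + 1) =
        (t + k) * ((-1) ^ k * Ring.choose (-t) k) := fun t k => by
    rw [pow_succ]; linear_combination -(-1) ^ k * Ring.choose_neg_succ_mul t k
  have hlt : ∀ k : ℕ, 1 ≤ k → r * ((-1) ^ k * Ring.choose (-s) k) ≤
      s * ((-1) ^ k * Ring.choose (-r) k) → r * ((-1) ^ (k + 1) * Ring.choose (-s) (k + 1)) <
      s * ((-1) ^ (k + 1) * Ring.choose (-r) (k + 1)) := fun k hk h => by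
    have hk' : (0 : ℝ) < k := by exact_mod_cast hk
    have hp := Ring.choose_neg_pos (hs.trans hr) k
    refine lt_of_mul_lt_mul_right ?_ (show (0 : ℝ) ≤ k + 1 by positivity)
    rw [mul_assoc r, mul_assoc s, step, step]
    calc r * ((s + k) * ((-1) ^ k * Ring.choose (-s) k))
        = (s + k) * (r * ((-1) ^ k * Ring.choose (-s) k)) := by ring
      _ ≤ (s + k) * (s * ((-1) ^ k * Ring.choose (-r) k)) := by gcongr
      _ < (r + k) * (s * ((-1) ^ k * Ring.choose (-r) k)) := by gcongr
      _ = _ := by ring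
  have hle : ∀ k : ℕ, r * ((-1) ^ (k + 1) * Ring.choose (-s) (k + 1)) ≤
      s * ((-1) ^ (k + 1) * Ring.choose (-r) (k + 1)) := fun k => by
    induction k with
    | zero => simp; linarith
    | succ k ih => exact (hlt _ (by omega) ih).le
  obtain ⟨j, rfl⟩ := Nat.exists_eq_add_of_le' hk
  have := hlt (j + 1) (by omega) (hle j)
  intro h
  refine this.ne ?_
  linear_combination -(-1) ^ (j + 2) * h

lemma isBigO_one_add_rpow_sub (a : ℝ) (k : ℕ) :
    (fun x : ℝ => (1 + x) ^ a - ∑ j ∈ Finset.range k, Ring.choose a j * x ^ j)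
      =O[𝓝 0] fun x => x ^ k := by
  have h := (Real.one_add_rpow_hasFPowerSeriesAt_zero (a := a)).isBigO_sub_partialSum_pow k
  simp only [zero_add, FormalMultilinearSeries.partialSum, binomialSeries_apply, List.ofFn_const,
    List.prod_replicate, smul_eq_mul, ← norm_pow] at h
  exact h.of_norm_right

variable {X : Type*} [MeasurableSpace X] {ν : Measure X} {ψ v : X → ℝ} {R : ℝ}

lemma MeasureTheory.Integrable.mul_pow (hψ : Integrable ψ ν) (hv : AEStronglyMeasurable v ν)
    (hR : ∀ x, |v x| ≤ R) (j : ℕ) : Integrable (fun x => ψ x * v x ^ j) ν :=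
  hψ.mul_bdd (c := R ^ j) (hv.pow j) (ae_of_all _ fun x => by
    rw [norm_pow]; exact pow_le_pow_left₀ (abs_nonneg _) (hR x) j)

/-- Taylor expansion at `t = 0` of `t ↦ ∫ ψ (1 + t v)^a`. -/
lemma isBigO_integral_one_add_rpow_sub (hψ : Integrable ψ ν) (hv : Measurable v)
    (hR : ∀ x, |v x| ≤ R) (a : ℝ) (k : ℕ) :
    (fun t : ℝ => ∫ x, ψ x * (1 + t * v x) ^ a ∂ν -
      ∑ j ∈ Finset.range k, Ring.choose a j * t ^ j * ∫ x, ψ x * v x ^ j ∂ν)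
      =O[𝓝 0] fun t => t ^ k := by
  obtain ⟨C, hC⟩ := (isBigO_one_add_rpow_sub a k).bound
  obtain ⟨δ, hδ, hC⟩ := Metric.eventually_nhds_iff.1 hC
  have hsmall : ∀ᶠ t : ℝ in 𝓝 0, |t| * (|R| + 1) < δ := by
    have : Tendsto (fun t : ℝ => |t| * (|R| + 1)) (𝓝 0) (𝓝 0) := by
      have h : Continuous fun t : ℝ => |t| * (|R| + 1) := by fun_prop
      simpa using h.tendsto 0
    exact this.eventually_lt_const hδ
  refine Asymptotics.IsBigO.of_bound (|C| * |R| ^ k * ∫ x, |ψ x| ∂ν) ?_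
  filter_upwards [hsmall] with t ht
  have hb : ∀ x, ‖(1 + t * v x) ^ a - ∑ j ∈ Finset.range k, Ring.choose a j * (t * v x) ^ j‖ ≤
      |C| * |R| ^ k * |t| ^ k := fun x => by
    have hx : |t * v x| ≤ |t| * |R| := by
      rw [abs_mul]
      exact mul_le_mul_of_nonneg_left ((hR x).trans (le_abs_self R)) (abs_nonneg t)
    refine (hC ?_).trans ?_
    · rw [dist_zero_right, Real.norm_eq_abs]
      nlinarith [abs_nonneg t]
    · rw [norm_pow, Real.norm_eq_abs, mul_assoc, mul_comm (|R| ^ k), ← mul_pow]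
      gcongr
      exact le_abs_self C
  have hrem : Integrable (fun x => ψ x * ((1 + t * v x) ^ a -
      ∑ j ∈ Finset.range k, Ring.choose a j * (t * v x) ^ j)) ν :=
    hψ.mul_bdd (by fun_prop) (ae_of_all _ hb)
  have hterm : ∀ j, Integrable (fun x => Ring.choose a j * t ^ j * (ψ x * v x ^ j)) ν :=
    fun j => (hψ.mul_pow hv.aestronglyMeasurable hR j).const_mul _
  have hsum : Integrable (fun x => ∑ j ∈ Finset.range k,
      Ring.choose a j * t ^ j * (ψ x * v x ^ j)) ν := integrable_finsetSum _ fun j _ => hterm j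
  have heq : ∀ x, ψ x * (1 + t * v x) ^ a = ψ x * ((1 + t * v x) ^ a -
      ∑ j ∈ Finset.range k, Ring.choose a j * (t * v x) ^ j) +
      ∑ j ∈ Finset.range k, Ring.choose a j * t ^ j * (ψ x * v x ^ j) := fun x => by
    rw [mul_sub, Finset.mul_sum, sub_add_eq_add_sub, add_sub_assoc, left_eq_add, sub_eq_zero]
    exact Finset.sum_congr rfl fun j _ => by ring
  simp only [heq]
  rw [integral_add hrem hsum, integral_finsetSum _ fun j _ => hterm j]
  simp only [integral_const_mul, add_sub_cancel_right]
  calc ‖∫ x, ψ x * ((1 + t * v x) ^ a - ∑ j ∈ Finset.range k, Ring.choose a j * (t * v x) ^ j) ∂ν‖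
      ≤ ∫ x, |ψ x| * (|C| * |R| ^ k * |t| ^ k) ∂ν := by
        refine norm_integral_le_of_norm_le (hψ.abs.mul_const _) (ae_of_all _ fun x => ?_)
        rw [norm_mul]
        exact mul_le_mul_of_nonneg_left (hb x) (norm_nonneg _)
    _ = |C| * |R| ^ k * (∫ x, |ψ x| ∂ν) * ‖t ^ k‖ := by
        rw [integral_mul_const, norm_pow, Real.norm_eq_abs]; ring

lemma hasDerivAt_integral_one_add_rpow (hψ : Integrable ψ ν) (hv : Measurable v)
    (hR : ∀ x, |v x| ≤ R) (a : ℝ) :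
    HasDerivAt (fun t : ℝ => ∫ x, ψ x * (1 + t * v x) ^ a ∂ν) (a * ∫ x, ψ x * v x ∂ν) 0 := by
  rw [hasDerivAt_iff_isLittleO_nhds_zero]
  refine ((isBigO_integral_one_add_rpow_sub hψ hv hR a 2).congr_left fun t => ?_).trans_isLittleO
    ((Asymptotics.isLittleO_pow_id one_lt_two).congr_left fun t => rfl)
  simp [Finset.sum_range_succ]; ring

/-- If all moments of order `< k` vanish, only the moment of order `k` contributes. -/
lemma isBigO_integral_one_add_rpow_sub_of_moments (hψ : Integrable ψ ν) (hv : Measurable v)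
    (hR : ∀ x, |v x| ≤ R) (a : ℝ) {k : ℕ} (hm : ∀ j < k, ∫ x, ψ x * v x ^ j ∂ν = 0) :
    (fun t : ℝ => ∫ x, ψ x * (1 + t * v x) ^ a ∂ν -
      Ring.choose a k * (∫ x, ψ x * v x ^ k ∂ν) * t ^ k) =O[𝓝 0] fun t => t ^ (k + 1) := by
  refine (isBigO_integral_one_add_rpow_sub hψ hv hR a (k + 1)).congr_left fun t => ?_
  rw [Finset.sum_range_succ, Finset.sum_eq_zero fun j hj => by
    rw [hm j (Finset.mem_range.1 hj), mul_zero]]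
  ring

/-- A function `a t^k + O(t^{k+1})`, `k ≥ 2`, with `F(t) = 2 F(t/2)` has `a = 0`. -/
lemma eq_zero_of_isBigO_of_eq_two_mul_half {F : ℝ → ℝ} {a : ℝ} {k : ℕ} (hk : 2 ≤ k)
    (hF : (fun t => F t - a * t ^ k) =O[𝓝 0] fun t => t ^ (k + 1))
    (h : ∀ᶠ t in 𝓝 0, F t = 2 * F (t / 2)) : a = 0 := by
  have hhalf : Tendsto (fun t : ℝ => t / 2) (𝓝 0) (𝓝 0) := by
    simpa using (continuous_id.div_const (2 : ℝ)).tendsto 0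
  have h2 := hF.comp_tendsto hhalf
  have h3 : (fun t : ℝ => (t / 2) ^ (k + 1)) =O[𝓝 0] fun t => t ^ (k + 1) := by
    refine Asymptotics.IsBigO.of_bound 1 (Eventually.of_forall fun t => ?_)
    rw [div_pow, norm_div, one_mul]
    refine div_le_self (norm_nonneg _) ?_
    rw [norm_pow]; exact one_le_pow₀ (by norm_num)
  have h4 := ((h2.trans h3).const_mul_left 2).sub hF
  set b := a * (1 - 2 * (1 / 2) ^ k) with hb
  have h5 : (fun t : ℝ => b * t ^ k) =O[𝓝 0] fun t => t ^ (k + 1) := by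
    refine h4.congr' ?_ EventuallyEq.rfl
    filter_upwards [h] with t ht
    simp only [Function.comp_apply, ht, hb, div_pow]
    field_simp; ring
  have h6 : b = 0 := by
    by_contra hne
    have h7 : (fun t : ℝ => t ^ k) =o[𝓝[≠] 0] fun t => t ^ k := by
      have h8 : (fun t : ℝ => t ^ k) =O[𝓝 0] fun t => t ^ (k + 1) :=
        (Asymptotics.isBigO_const_mul_left_iff hne).1 h5
      exact (h8.trans_isLittleO (Asymptotics.isLittleO_pow_pow (Nat.lt_succ_self k))).mono
        nhdsWithin_le_nhds
    refine Asymptotics.isLittleO_irrefl ?_ h7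
    refine Eventually.frequently ?_
    filter_upwards [self_mem_nhdsWithin] with t ht
    exact pow_ne_zero _ ht
  rcases mul_eq_zero.1 h6 with h7 | h7
  · exact h7
  · exfalso
    have : (1 / 2 : ℝ) ^ k ≤ (1 / 2) ^ 2 := pow_le_pow_of_le_one (by norm_num) (by norm_num) hk
    norm_num at this; linarith

end Binomial

section Moments

variable {X : Type*} [MeasurableSpace X] {ν : Measure X} {ψ : X → ℝ}

lemma integral_mul_cexp_eq_zero_of_moments (hψ : Integrable ψ ν) {v : X → ℝ} (hv : Measurable v)
    {R : ℝ} (hR : ∀ x, |v x| ≤ R) (hm : ∀ k : ℕ, ∫ x, ψ x * v x ^ k ∂ν = 0) :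
    ∫ x, (ψ x : ℂ) * Complex.exp (v x * Complex.I) ∂ν = 0 := by
  have hmeas : ∀ k : ℕ, AEStronglyMeasurable
      (fun x => (ψ x : ℂ) * ((v x * Complex.I) ^ k / k.factorial)) ν := fun k =>
    (Complex.continuous_ofReal.comp_aestronglyMeasurable hψ.1).mul
      (Measurable.aestronglyMeasurable (by fun_prop))
  have h := hasSum_integral_of_dominated_convergence (μ := ν)
    (F := fun (k : ℕ) x => (ψ x : ℂ) * ((v x * Complex.I) ^ k / k.factorial))
    (f := fun x => (ψ x : ℂ) * Complex.exp (v x * Complex.I))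
    (fun k x => |ψ x| * (R ^ k / k.factorial)) hmeas
    (fun k => ae_of_all _ fun x => by
      have : |v x| ^ k ≤ R ^ k := pow_le_pow_left₀ (abs_nonneg _) (hR x) k
      simp only [norm_mul, norm_div, norm_pow, Complex.norm_real, Complex.norm_I, mul_one,
        Real.norm_eq_abs, Complex.norm_natCast]
      gcongr)
    (ae_of_all _ fun x => (Real.summable_pow_div_factorial R).mul_left _)
    (by simp only [tsum_mul_left]; exact hψ.abs.mul_const _)
    (ae_of_all _ fun x => by
      have hsum := NormedSpace.expSeries_div_hasSum_exp (𝔸 := ℂ) (v x * Complex.I)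
      rw [← Complex.exp_eq_exp_ℂ] at hsum
      exact hsum.mul_left (ψ x : ℂ))
  have hzero : ∀ k : ℕ, ∫ x, (ψ x : ℂ) * ((v x * Complex.I) ^ k / k.factorial) ∂ν = 0 := fun k => by
    have : ∀ x, (ψ x : ℂ) * ((v x * Complex.I) ^ k / k.factorial) =
        ((ψ x * v x ^ k : ℝ) : ℂ) * (Complex.I ^ k / k.factorial) := fun x => by push_cast; ring
    simp only [this]
    rw [integral_mul_const, integral_complex_ofReal, hm k, Complex.ofReal_zero, zero_mul]
  simp only [hzero] at h
  exact h.unique hasSum_zero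

/-- An integrable density is determined by the Fourier transform of its push-forward under an
injective map. -/
lemma ae_eq_zero_of_integral_mul_cexp_eq_zero {F : Type*} [NormedAddCommGroup F] [NormedSpace ℝ F]
    [CompleteSpace F] [SecondCountableTopology F] [MeasurableSpace F] [BorelSpace F]
    (hψ : Integrable ψ ν) {T : X → F} (hT : MeasurableEmbedding T)
    (h : ∀ L : StrongDual ℝ F, ∫ x, (ψ x : ℂ) * Complex.exp (L (T x) * Complex.I) ∂ν = 0) :
    ψ =ᵐ[ν] 0 := by
  have := isFiniteMeasure_withDensity_ofReal hψ.2
  have := isFiniteMeasure_withDensity_ofReal hψ.neg.2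
  have hchar : ∀ {η : X → ℝ} (_ : Integrable η ν) (L : StrongDual ℝ F),
      charFunDual ((ν.withDensity fun x => ENNReal.ofReal (η x)).map T) L =
        ∫ x, (max (η x) 0 : ℝ) * Complex.exp (L (T x) * Complex.I) ∂ν := fun {η} hη L => by
    rw [charFunDual_apply, integral_map hT.measurable.aemeasurable
      (Measurable.aestronglyMeasurable (by fun_prop)),
      integral_withDensity_eq_integral_toReal_smul₀ hη.1.aemeasurable.ennreal_ofReal (by simp)]
    simp only [ENNReal.toReal_ofReal', Complex.real_smul]
  have hint : ∀ {η : X → ℝ} (_ : Integrable η ν) (L : StrongDual ℝ F),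
      Integrable (fun x => ((max (η x) 0 : ℝ) : ℂ) * Complex.exp (L (T x) * Complex.I)) ν :=
    fun {η} hη L => hη.pos_part.ofReal.mul_bdd (c := 1)
      ((by have := hT.measurable; fun_prop : Measurable fun x =>
        Complex.exp (L (T x) * Complex.I)).aestronglyMeasurable)
      (ae_of_all _ fun x => (Complex.norm_exp_ofReal_mul_I _).le)
  have hmap : (ν.withDensity fun x => ENNReal.ofReal (ψ x)).map T =
      (ν.withDensity fun x => ENNReal.ofReal ((-ψ) x)).map T := by
    refine Measure.ext_of_charFunDual (funext fun L => ?_)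
    rw [hchar hψ, hchar hψ.neg, ← sub_eq_zero, ← integral_sub (hint hψ L) (hint hψ.neg L), ← h L]
    congr 1; ext x
    rw [← sub_mul, ← Complex.ofReal_sub, Pi.neg_apply]
    congr 2
    rcases le_total 0 (ψ x) with h0 | h0
    · rw [max_eq_left h0, max_eq_right (by linarith), sub_zero]
    · rw [max_eq_right h0, max_eq_left (by linarith), zero_sub, neg_neg]
  have heq := congrArg (Measure.comap T) hmap
  rw [hT.comap_map, hT.comap_map, withDensity_eq_iff hψ.1.aemeasurable.ennreal_ofReal
    hψ.neg.1.aemeasurable.ennreal_ofReal (hψ.lintegral_lt_top.ne)] at heq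
  filter_upwards [heq] with x hx
  rw [Pi.neg_apply] at hx
  have h1 := congrArg ENNReal.toReal hx
  rw [ENNReal.toReal_ofReal', ENNReal.toReal_ofReal'] at h1
  rcases le_total 0 (ψ x) with h0 | h0
  · rw [max_eq_left h0, max_eq_right (by linarith)] at h1; exact h1
  · rw [max_eq_right h0, max_eq_left (by linarith)] at h1; simp; linarith

end Moments

section Density

variable {n : ℕ}

lemma one_add_norm_sq_pos (x : EuclideanSpace ℝ (Fin n)) : 0 < 1 + ‖x‖ ^ 2 := by positivity

/-- The quadratic polynomial `quad a b c` relative to `1 + |x|²`. -/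
noncomputable def quadRatio (a : ℝ) (b : EuclideanSpace ℝ (Fin n)) (c : ℝ)
    (x : EuclideanSpace ℝ (Fin n)) : ℝ :=
  quad a b c x / (1 + ‖x‖ ^ 2)

lemma continuous_quadRatio (a : ℝ) (b : EuclideanSpace ℝ (Fin n)) (c : ℝ) :
    Continuous (quadRatio a b c) :=
  (continuous_quad a b c).div (by fun_prop) fun x => (one_add_norm_sq_pos x).ne'

lemma abs_quadRatio_le (a : ℝ) (b : EuclideanSpace ℝ (Fin n)) (c : ℝ)
    (x : EuclideanSpace ℝ (Fin n)) :
    |quadRatio a b c x| ≤ |a| + ‖b‖ + |c| := by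
  rw [quadRatio, abs_div, abs_of_pos (one_add_norm_sq_pos x),
    div_le_iff₀ (one_add_norm_sq_pos x), quad]
  have h1 : |a * ‖x‖ ^ 2 + 2 * inner ℝ b x + c| ≤ |a| * ‖x‖ ^ 2 + 2 * (‖b‖ * ‖x‖) + |c| := by
    refine (abs_add_three _ _ _).trans ?_
    rw [abs_mul, abs_mul, abs_two, abs_of_nonneg (sq_nonneg ‖x‖)]
    gcongr
    exact abs_real_inner_le_norm b x
  nlinarith [abs_nonneg a, abs_nonneg c, norm_nonneg b,
    mul_nonneg (norm_nonneg b) (sq_nonneg (‖x‖ - 1)), mul_nonneg (abs_nonneg c) (sq_nonneg ‖x‖)]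

/-- A continuous integrable function is zero if it is orthogonal to all powers of the ratios
`(2⟨b,x⟩ + c) / (1 + |x|²)`. -/
lemma eq_zero_of_moments {ψ : EuclideanSpace ℝ (Fin n) → ℝ} (hc : Continuous ψ)
    (hψ : Integrable ψ)
    (h : ∀ b c, ∀ k : ℕ, ∫ x, ψ x * quadRatio 0 b c x ^ k = 0) : ψ = 0 := by
  set T : EuclideanSpace ℝ (Fin n) → EuclideanSpace ℝ (Fin n) × ℝ :=
    fun x => ((1 + ‖x‖ ^ 2)⁻¹ • x, (1 + ‖x‖ ^ 2)⁻¹) with hTdef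
  have hTc : Continuous T := by
    have : Continuous fun x : EuclideanSpace ℝ (Fin n) => (1 + ‖x‖ ^ 2)⁻¹ :=
      Continuous.inv₀ (by fun_prop) fun x => (one_add_norm_sq_pos x).ne'
    exact (this.smul continuous_id).prodMk this
  have hTi : Function.Injective T := fun x y hxy => by
    obtain ⟨h1, h2⟩ := Prod.mk.inj hxy
    rw [h2] at h1
    exact smul_right_injective _ (inv_pos.2 (one_add_norm_sq_pos y)).ne' h1
  refine (Continuous.ae_eq_iff_eq volume hc continuous_zero).1
    (ae_eq_zero_of_integral_mul_cexp_eq_zero hψ (hTc.measurableEmbedding hTi) fun L => ?_)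
  set b := (InnerProductSpace.toDual ℝ (EuclideanSpace ℝ (Fin n))).symm
    ((2 : ℝ)⁻¹ • L.comp (ContinuousLinearMap.inl ℝ _ ℝ)) with hb
  have hL : ∀ x, L (T x) = quadRatio 0 b (L (0, 1)) x := fun x => by
    have h1 : T x = (1 + ‖x‖ ^ 2)⁻¹ • ((x, 0) + (0, 1) : EuclideanSpace ℝ (Fin n) × ℝ) := by
      simp [hTdef]
    rw [h1, map_smul, map_add, quadRatio, quad, hb, InnerProductSpace.toDual_symm_apply]
    simp [div_eq_inv_mul]
  simp only [hL]
  exact integral_mul_cexp_eq_zero_of_moments hψ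
    (continuous_quadRatio _ _ _).measurable (abs_quadRatio_le _ _ _) (h _ _)

end Density

section Perturbation

variable {n : ℕ} {a c t : ℝ} {b : EuclideanSpace ℝ (Fin n)}

lemma quad_perturb (a : ℝ) (b : EuclideanSpace ℝ (Fin n)) (c t : ℝ)
    (x : EuclideanSpace ℝ (Fin n)) :
    quad (1 + t * a) (t • b) (1 + t * c) x = (1 + ‖x‖ ^ 2) * (1 + t * quadRatio a b c x) := by
  have := (one_add_norm_sq_pos x).ne'
  rw [quadRatio, quad, quad, real_inner_smul_left]
  field_simp
  ring

lemma abs_mul_quadRatio_le (ht : |t| * (|a| + ‖b‖ + |c|) ≤ 1 / 2)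
    (x : EuclideanSpace ℝ (Fin n)) : |t * quadRatio a b c x| ≤ 1 / 2 := by
  rw [abs_mul]
  exact (mul_le_mul_of_nonneg_left (abs_quadRatio_le a b c x) (abs_nonneg t)).trans ht

lemma half_le_one_add_mul_quadRatio (ht : |t| * (|a| + ‖b‖ + |c|) ≤ 1 / 2)
    (x : EuclideanSpace ℝ (Fin n)) : 1 / 2 ≤ 1 + t * quadRatio a b c x := by
  linarith [(abs_le.1 (abs_mul_quadRatio_le ht x)).1]

lemma half_le_quad_perturb (ht : |t| * (|a| + ‖b‖ + |c|) ≤ 1 / 2)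
    (x : EuclideanSpace ℝ (Fin n)) : 1 / 2 ≤ quad (1 + t * a) (t • b) (1 + t * c) x := by
  rw [quad_perturb]
  nlinarith [half_le_one_add_mul_quadRatio ht x, sq_nonneg ‖x‖]

lemma quad_perturb_rpow (ht : |t| * (|a| + ‖b‖ + |c|) ≤ 1 / 2) (r : ℝ)
    (x : EuclideanSpace ℝ (Fin n)) :
    quad (1 + t * a) (t • b) (1 + t * c) x ^ r =
      (1 + ‖x‖ ^ 2) ^ r * (1 + t * quadRatio a b c x) ^ r := by
  rw [quad_perturb, Real.mul_rpow (one_add_norm_sq_pos x).le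
    (by linarith [half_le_one_add_mul_quadRatio ht x])]

lemma discr_perturb_pos (ht : |t| * (|a| + ‖b‖ + |c|) ≤ 1 / 2) :
    0 < (1 + t * a) * (1 + t * c) - ‖t • b‖ ^ 2 := by
  have h : |t * a| + ‖t • b‖ + |t * c| ≤ 1 / 2 := by
    rw [norm_smul, abs_mul, abs_mul, Real.norm_eq_abs]; linarith
  have h1 := neg_abs_le (t * a)
  have h2 := neg_abs_le (t * c)
  have h3 := norm_nonneg (t • b)
  have h4 := abs_nonneg (t * a)
  have h5 := abs_nonneg (t * c)
  nlinarith [mul_nonneg h4 h5, mul_le_mul (by linarith : 1 - |t * a| ≤ 1 + t * a)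
    (by linarith : 1 - |t * c| ≤ 1 + t * c) (by linarith) (by linarith)]

lemma one_add_mul_pos (ht : |t| * (|a| + ‖b‖ + |c|) ≤ 1 / 2) : 0 < 1 + t * a := by
  have h : |t * a| ≤ 1 / 2 := by
    rw [abs_mul]
    refine le_trans ?_ ht
    gcongr
    linarith [norm_nonneg b, abs_nonneg c]
  linarith [(abs_le.1 h).1]

lemma contDiff_quad_perturb_rpow (ht : |t| * (|a| + ‖b‖ + |c|) ≤ 1 / 2) (r : ℝ) :
    ContDiff ℝ 2 fun x => quad (1 + t * a) (t • b) (1 + t * c) x ^ r :=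
  (contDiff_infty.1 (contDiff_quad _ _ _) 2).rpow_const_of_ne fun x => by
    linarith [half_le_quad_perturb ht x]

lemma abs_quad_perturb_rpow_le (ht : |t| * (|a| + ‖b‖ + |c|) ≤ 1 / 2) {r : ℝ} (hr : 0 ≤ r)
    (x : EuclideanSpace ℝ (Fin n)) :
    |quad (1 + t * a) (t • b) (1 + t * c) x ^ (-r)| ≤ (1 / 2) ^ (-r) := by
  have h := half_le_quad_perturb ht x
  rw [abs_of_nonneg (Real.rpow_nonneg (by linarith) _)]
  exact Real.rpow_le_rpow_of_nonpos (by norm_num) h (by linarith)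

lemma abs_one_add_mul_quadRatio_rpow_le (ht : |t| * (|a| + ‖b‖ + |c|) ≤ 1 / 2) {r : ℝ}
    (hr : 0 ≤ r) (x : EuclideanSpace ℝ (Fin n)) :
    |(1 + t * quadRatio a b c x) ^ (-r)| ≤ (1 / 2) ^ (-r) := by
  have h := half_le_one_add_mul_quadRatio ht x
  rw [abs_of_nonneg (Real.rpow_nonneg (by linarith) _)]
  exact Real.rpow_le_rpow_of_nonpos (by norm_num) h (by linarith)

lemma continuous_one_add_mul_quadRatio_rpow (ht : |t| * (|a| + ‖b‖ + |c|) ≤ 1 / 2) (r : ℝ) :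
    Continuous fun x => (1 + t * quadRatio a b c x) ^ r :=
  Continuous.rpow_const (by have := continuous_quadRatio a b c; fun_prop) fun x =>
    Or.inl (by linarith [half_le_one_add_mul_quadRatio ht x])

lemma eventually_abs_mul_le (R : ℝ) : ∀ᶠ t : ℝ in 𝓝 0, |t| * R ≤ 1 / 2 := by
  have h : Continuous fun t : ℝ => |t| * R := by fun_prop
  exact (h.tendsto' 0 0 (by simp)).eventually_le_const (by norm_num)

lemma continuous_one_add_norm_sq_rpow (r : ℝ) :
    Continuous fun x : EuclideanSpace ℝ (Fin n) => (1 + ‖x‖ ^ 2) ^ r :=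
  Continuous.rpow_const (by fun_prop) fun x => Or.inl (one_add_norm_sq_pos x).ne'

lemma integrable_one_add_norm_sq_rpow {r : ℝ} (hr : (n : ℝ) < 2 * r) :
    Integrable fun x : EuclideanSpace ℝ (Fin n) => (1 + ‖x‖ ^ 2) ^ (-r) := by
  have := integrable_rpow_neg_one_add_norm_sq (E := EuclideanSpace ℝ (Fin n)) (μ := volume)
    (r := 2 * r) (by simpa using hr)
  simpa [neg_div, mul_div_cancel_left₀] using this

lemma integrable_of_abs_le_one_add_norm_sq_rpow {f : EuclideanSpace ℝ (Fin n) → ℝ}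
    (hf : Continuous f) {r C : ℝ} (hr : (n : ℝ) < 2 * r)
    (h : ∀ x, |f x| ≤ C * (1 + ‖x‖ ^ 2) ^ (-r)) : Integrable f :=
  ((integrable_one_add_norm_sq_rpow hr).const_mul C).mono' hf.aestronglyMeasurable (ae_of_all _ h)

end Perturbation

section WeakSolutions

variable {n : ℕ} {γ s κ p : ℝ}

/-- Duality formulation of `L φ = V φ`, where `L` is the principal value operator `HasPV`. -/
def IsWeakSol (n : ℕ) (γ : ℝ) (V φ : EuclideanSpace ℝ (Fin n) → ℝ) : Prop :=
  ∀ w g : EuclideanSpace ℝ (Fin n) → ℝ, ContDiff ℝ 2 w → (∃ B, ∀ x, |w x| ≤ B) → Integrable w →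
    HasPV n γ w g → Integrable g → ∫ x, w x * (V x * φ x) = ∫ x, g x * φ x

lemma IsWeakSol.sub {V φ ψ : EuclideanSpace ℝ (Fin n) → ℝ} (hφ : IsWeakSol n γ V φ)
    (hψ : IsWeakSol n γ V ψ) (hVc : Continuous V) (hφc : Continuous φ) (hψc : Continuous ψ)
    {BV B B' : ℝ} (hBV : ∀ x, |V x| ≤ BV) (hB : ∀ x, |φ x| ≤ B) (hB' : ∀ x, |ψ x| ≤ B') :
    IsWeakSol n γ V (fun x => φ x - ψ x) := fun w g hw hb hwi hpv hgi => by
  have key : ∀ {f η : EuclideanSpace ℝ (Fin n) → ℝ} {M : ℝ}, Integrable f → Continuous η →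
      (∀ x, |η x| ≤ M) → Integrable fun x => f x * η x := fun {f η M} hf hη hM =>
    hf.mul_bdd (c := M) hη.aestronglyMeasurable (ae_of_all _ hM)
  have hV : ∀ {η : EuclideanSpace ℝ (Fin n) → ℝ} {M : ℝ}, (∀ x, |η x| ≤ M) →
      ∀ x, |V x * η x| ≤ BV * M := fun {η M} hM x => by
    rw [abs_mul]
    exact mul_le_mul (hBV x) (hM x) (abs_nonneg _) ((abs_nonneg _).trans (hBV x))
  simp only [mul_sub]
  rw [integral_sub (key hwi (η := fun x => V x * φ x) (hVc.mul hφc) (hV hB))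
      (key hwi (η := fun x => V x * ψ x) (hVc.mul hψc) (hV hB')),
    integral_sub (key hgi hφc hB) (key hgi hψc hB'), hφ w g hw hb hwi hpv hgi,
    hψ w g hw hb hwi hpv hgi]

lemma HasPV.quad_perturb
    (h : HasPV n γ (fun x => (1 + ‖x‖ ^ 2) ^ (-s)) (fun x => κ * (1 + ‖x‖ ^ 2) ^ (-(s + 2 * γ))))
    {a c t : ℝ} {b : EuclideanSpace ℝ (Fin n)} (ht : |t| * (|a| + ‖b‖ + |c|) ≤ 1 / 2) :
    HasPV n γ (fun x => quad (1 + t * a) (t • b) (1 + t * c) x ^ (-s))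
      (fun x => κ * (((1 + t * a) * (1 + t * c) - ‖t • b‖ ^ 2) ^ γ *
        quad (1 + t * a) (t • b) (1 + t * c) x ^ (-(s + 2 * γ)))) :=
  h.quad_rpow (one_add_mul_pos ht) _ (discr_perturb_pos ht)

/-- The defect in the pairing of a weak solution `φ` with the bubble perturbed by `t (a, b, c)`. -/
noncomputable def bubbleDefect (γ s p : ℝ) (φ : EuclideanSpace ℝ (Fin n) → ℝ) (a : ℝ)
    (b : EuclideanSpace ℝ (Fin n)) (c t : ℝ) : ℝ :=
  ((1 + t * a) * (1 + t * c) - ‖t • b‖ ^ 2) ^ γ *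
      (∫ x, φ x * (1 + ‖x‖ ^ 2) ^ (-(s + 2 * γ)) * (1 + t * quadRatio a b c x) ^ (-(s + 2 * γ))) -
    p * ∫ x, φ x * (1 + ‖x‖ ^ 2) ^ (-(s + 2 * γ)) * (1 + t * quadRatio a b c x) ^ (-s)

lemma integrable_mul_one_add_norm_sq_rpow {φ : EuclideanSpace ℝ (Fin n) → ℝ} (hφ : Continuous φ)
    {B : ℝ} (hB : ∀ x, |φ x| ≤ B) {r : ℝ} (hr : (n : ℝ) < 2 * r) :
    Integrable fun x => φ x * (1 + ‖x‖ ^ 2) ^ (-r) :=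
  (integrable_one_add_norm_sq_rpow hr).bdd_mul hφ.aestronglyMeasurable (ae_of_all _ hB)

lemma integrable_mul_one_add_mul_quadRatio_rpow {ψ : EuclideanSpace ℝ (Fin n) → ℝ}
    (hψ : Integrable ψ) {a c t : ℝ} {b : EuclideanSpace ℝ (Fin n)}
    (ht : |t| * (|a| + ‖b‖ + |c|) ≤ 1 / 2) {r : ℝ} (hr : 0 ≤ r) :
    Integrable fun x => ψ x * (1 + t * quadRatio a b c x) ^ (-r) :=
  hψ.mul_bdd (continuous_one_add_mul_quadRatio_rpow ht _).aestronglyMeasurable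
    (ae_of_all _ (abs_one_add_mul_quadRatio_rpow_le ht hr))

lemma IsWeakSol.bubbleDefect_combination (hn : 1 ≤ n) (hγ0 : 0 < γ) (hγ1 : γ < 1) (hs : 0 < s)
    (hsn : 2 * s = n - 2 * γ) (hκ : κ ≠ 0)
    (h : HasPV n γ (fun x => (1 + ‖x‖ ^ 2) ^ (-s)) (fun x => κ * (1 + ‖x‖ ^ 2) ^ (-(s + 2 * γ))))
    {φ : EuclideanSpace ℝ (Fin n) → ℝ} (hφ : Continuous φ) {B : ℝ} (hB : ∀ x, |φ x| ≤ B)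
    (hw : IsWeakSol n γ (fun x => p * κ * (1 + ‖x‖ ^ 2) ^ (-(2 * γ))) φ)
    {a c t : ℝ} {b : EuclideanSpace ℝ (Fin n)} (ht : |t| * (|a| + ‖b‖ + |c|) ≤ 1 / 2) (l r : ℝ)
    (hint : Integrable fun x => (1 + ‖x‖ ^ 2) ^ (-s) * ((1 + t * quadRatio a b c x) ^ (-s) +
      l * (1 + t / 2 * quadRatio a b c x) ^ (-s) + r)) :
    bubbleDefect γ s p φ a b c t + l * bubbleDefect γ s p φ a b c (t / 2) +
      r * bubbleDefect γ s p φ a b c 0 = 0 := by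
  have hR : 0 ≤ |a| + ‖b‖ + |c| := by positivity
  have ht2 : |t / 2| * (|a| + ‖b‖ + |c|) ≤ 1 / 2 := by
    rw [abs_div, abs_two]; nlinarith [mul_nonneg (abs_nonneg t) hR]
  have ht0 : |(0 : ℝ)| * (|a| + ‖b‖ + |c|) ≤ 1 / 2 := by norm_num
  have hs' : (n : ℝ) < 2 * (s + 2 * γ) := by linarith
  have hs'0 : 0 ≤ s + 2 * γ := by linarith
  set ψ := fun x => φ x * (1 + ‖x‖ ^ 2) ^ (-(s + 2 * γ)) with hψdef
  have hψ : Integrable ψ := integrable_mul_one_add_norm_sq_rpow hφ hB hs'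
  have hQ := integrable_one_add_norm_sq_rpow (n := n) hs'
  have hc : ∀ {τ : ℝ}, |τ| * (|a| + ‖b‖ + |c|) ≤ 1 / 2 → ContDiff ℝ 2
      fun x => quad (1 + τ * a) (τ • b) (1 + τ * c) x ^ (-s) :=
    fun hτ => contDiff_quad_perturb_rpow hτ _
  have hb : ∀ {τ : ℝ}, |τ| * (|a| + ‖b‖ + |c|) ≤ 1 / 2 → ∀ (e : ℝ) (x),
      |e * quad (1 + τ * a) (τ • b) (1 + τ * c) x ^ (-s)| ≤ |e| * (1 / 2) ^ (-s) :=
    fun hτ e x => by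
      rw [abs_mul]
      exact mul_le_mul_of_nonneg_left (abs_quad_perturb_rpow_le hτ hs.le x) (abs_nonneg e)
  have hpv := ((((h.quad_perturb ht).const_mul 1).add hn hγ0 hγ1
    ((h.quad_perturb ht2).const_mul l) (continuous_const.mul (hc ht).continuous)
    (continuous_const.mul (hc ht2).continuous) (hb ht 1) (hb ht2 l)).add hn hγ0 hγ1
    ((h.quad_perturb ht0).const_mul r)
    ((continuous_const.mul (hc ht).continuous).add (continuous_const.mul (hc ht2).continuous))
    (continuous_const.mul (hc ht0).continuous)
    (fun x => (abs_add_le _ _).trans (add_le_add (hb ht 1 x) (hb ht2 l x))) (hb ht0 r))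
  have hI : ∀ {τ : ℝ}, |τ| * (|a| + ‖b‖ + |c|) ≤ 1 / 2 → ∀ {e : ℝ}, 0 ≤ e →
      Integrable fun x => ψ x * (1 + τ * quadRatio a b c x) ^ (-e) :=
    fun hτ _ he => integrable_mul_one_add_mul_quadRatio_rpow hψ hτ he
  have key := hw _ _
    (((contDiff_const.mul (hc ht)).add (contDiff_const.mul (hc ht2))).add
      (contDiff_const.mul (hc ht0)))
    ⟨_, fun x => (abs_add_le _ _).trans (add_le_add ((abs_add_le _ _).trans
      (add_le_add (hb ht 1 x) (hb ht2 l x))) (hb ht0 r x))⟩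
    (hint.congr (ae_of_all _ fun x => by
      beta_reduce
      rw [quad_perturb_rpow ht, quad_perturb_rpow ht2, quad_perturb_rpow ht0, zero_mul, add_zero,
        Real.one_rpow]
      ring)) hpv
    (by
      have hg : ∀ {τ : ℝ}, |τ| * (|a| + ‖b‖ + |c|) ≤ 1 / 2 → ∀ d : ℝ, Integrable fun x =>
          d * (κ * (((1 + τ * a) * (1 + τ * c) - ‖τ • b‖ ^ 2) ^ γ *
            quad (1 + τ * a) (τ • b) (1 + τ * c) x ^ (-(s + 2 * γ)))) := fun hτ d => by
        simp only [quad_perturb_rpow hτ]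
        exact (((integrable_mul_one_add_mul_quadRatio_rpow hQ hτ hs'0).const_mul _).const_mul
          _).const_mul _
      exact ((hg ht 1).add (hg ht2 l)).add (hg ht0 r))
  have hsplit : ∀ e : ℝ, 0 ≤ e → ∀ d₁ d₂ d₃ : ℝ,
      ∫ x, (d₁ * (ψ x * (1 + t * quadRatio a b c x) ^ (-e)) +
        d₂ * (ψ x * (1 + t / 2 * quadRatio a b c x) ^ (-e)) +
        d₃ * (ψ x * (1 + 0 * quadRatio a b c x) ^ (-e))) =
      d₁ * (∫ x, ψ x * (1 + t * quadRatio a b c x) ^ (-e)) +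
        d₂ * (∫ x, ψ x * (1 + t / 2 * quadRatio a b c x) ^ (-e)) +
        d₃ * ∫ x, ψ x * (1 + 0 * quadRatio a b c x) ^ (-e) := fun e he d₁ d₂ d₃ => by
    have h12 : Integrable fun x => d₁ * (ψ x * (1 + t * quadRatio a b c x) ^ (-e)) +
        d₂ * (ψ x * (1 + t / 2 * quadRatio a b c x) ^ (-e)) :=
      ((hI ht he).const_mul d₁).add ((hI ht2 he).const_mul d₂)
    rw [integral_add h12 ((hI ht0 he).const_mul d₃), integral_add ((hI ht he).const_mul d₁)
      ((hI ht2 he).const_mul d₂), integral_const_mul, integral_const_mul, integral_const_mul]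
  have hleft : ∀ x, (1 * quad (1 + t * a) (t • b) (1 + t * c) x ^ (-s) +
      l * quad (1 + t / 2 * a) ((t / 2) • b) (1 + t / 2 * c) x ^ (-s) +
      r * quad (1 + 0 * a) ((0 : ℝ) • b) (1 + 0 * c) x ^ (-s)) *
      (p * κ * (1 + ‖x‖ ^ 2) ^ (-(2 * γ)) * φ x) =
      (p * κ) * (ψ x * (1 + t * quadRatio a b c x) ^ (-s)) +
        (p * κ * l) * (ψ x * (1 + t / 2 * quadRatio a b c x) ^ (-s)) +
        (p * κ * r) * (ψ x * (1 + 0 * quadRatio a b c x) ^ (-s)) := fun x => by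
    rw [quad_perturb_rpow ht, quad_perturb_rpow ht2, quad_perturb_rpow ht0]
    simp only [hψdef, neg_add, Real.rpow_add (one_add_norm_sq_pos x)]
    ring
  have hright : ∀ x, (1 * (κ * (((1 + t * a) * (1 + t * c) - ‖t • b‖ ^ 2) ^ γ *
      quad (1 + t * a) (t • b) (1 + t * c) x ^ (-(s + 2 * γ)))) +
      l * (κ * (((1 + t / 2 * a) * (1 + t / 2 * c) - ‖(t / 2) • b‖ ^ 2) ^ γ *
      quad (1 + t / 2 * a) ((t / 2) • b) (1 + t / 2 * c) x ^ (-(s + 2 * γ)))) +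
      r * (κ * (((1 + 0 * a) * (1 + 0 * c) - ‖(0 : ℝ) • b‖ ^ 2) ^ γ *
      quad (1 + 0 * a) ((0 : ℝ) • b) (1 + 0 * c) x ^ (-(s + 2 * γ))))) * φ x =
      (κ * ((1 + t * a) * (1 + t * c) - ‖t • b‖ ^ 2) ^ γ) *
        (ψ x * (1 + t * quadRatio a b c x) ^ (-(s + 2 * γ))) +
      (κ * l * ((1 + t / 2 * a) * (1 + t / 2 * c) - ‖(t / 2) • b‖ ^ 2) ^ γ) *
        (ψ x * (1 + t / 2 * quadRatio a b c x) ^ (-(s + 2 * γ))) +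
      (κ * r * ((1 + 0 * a) * (1 + 0 * c) - ‖(0 : ℝ) • b‖ ^ 2) ^ γ) *
        (ψ x * (1 + 0 * quadRatio a b c x) ^ (-(s + 2 * γ))) := fun x => by
    rw [quad_perturb_rpow ht, quad_perturb_rpow ht2, quad_perturb_rpow ht0]
    simp only [hψdef]
    ring
  simp only [hleft, hright] at key
  rw [hsplit _ hs.le, hsplit _ hs'0] at key
  apply mul_left_cancel₀ hκ
  simp only [bubbleDefect]
  linear_combination -key

end WeakSolutions

section Kernel

variable {n : ℕ} {γ s κ p : ℝ}

lemma hasDerivAt_discr_rpow (a : ℝ) (b : EuclideanSpace ℝ (Fin n)) (c γ : ℝ) :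
    HasDerivAt (fun t : ℝ => ((1 + t * a) * (1 + t * c) - ‖t • b‖ ^ 2) ^ γ) (γ * (a + c)) 0 := by
  have h1 : HasDerivAt (fun t : ℝ => (1 + t * a) * (1 + t * c) - t ^ 2 * ‖b‖ ^ 2) (a + c) 0 := by
    have := ((((hasDerivAt_id' (0 : ℝ)).mul_const a).const_add 1).fun_mul
      (((hasDerivAt_id' (0 : ℝ)).mul_const c).const_add 1)).fun_sub
      (((hasDerivAt_id' (0 : ℝ)).fun_pow 2).mul_const (‖b‖ ^ 2))
    exact this.congr_deriv (by simp)
  have h2 := h1.rpow_const (p := γ) (Or.inl (by simp))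
  simp only [norm_smul, mul_pow, Real.norm_eq_abs, sq_abs]
  simpa [mul_comm] using h2

lemma one_add_norm_sq_rpow_le_one {r : ℝ} (hr : 0 ≤ r) (x : EuclideanSpace ℝ (Fin n)) :
    |(1 + ‖x‖ ^ 2) ^ (-r)| ≤ 1 := by
  rw [abs_of_nonneg (Real.rpow_nonneg (one_add_norm_sq_pos x).le _)]
  exact Real.rpow_le_one_of_one_le_of_nonpos (by nlinarith [sq_nonneg ‖x‖]) (by linarith)

lemma isWeakSol_kernel (hn : 1 ≤ n) (hγ0 : 0 < γ) (hγ1 : γ < 1) (hs : 0 < s)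
    (hps : p * s = s + 2 * γ)
    (h : HasPV n γ (fun x => (1 + ‖x‖ ^ 2) ^ (-s)) (fun x => κ * (1 + ‖x‖ ^ 2) ^ (-(s + 2 * γ))))
    (a : ℝ) (b : EuclideanSpace ℝ (Fin n)) :
    IsWeakSol n γ (fun x => p * κ * (1 + ‖x‖ ^ 2) ^ (-(2 * γ)))
      (fun x => (1 + ‖x‖ ^ 2) ^ (-s) * quadRatio a b (-a) x) := by
  rintro w g hw ⟨B, hB⟩ hwi hpv hgi
  have hs' : 0 ≤ s + 2 * γ := by linarith
  have hψ : ∀ {f : EuclideanSpace ℝ (Fin n) → ℝ}, Integrable f → ∀ {r : ℝ}, 0 ≤ r →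
      Integrable fun x => f x * (1 + ‖x‖ ^ 2) ^ (-r) := fun hf _ hr =>
    hf.mul_bdd (continuous_one_add_norm_sq_rpow _).aestronglyMeasurable
      (ae_of_all _ (one_add_norm_sq_rpow_le_one hr))
  have hu := continuous_quadRatio a b (-a)
  have hR := abs_quadRatio_le a b (-a)
  have hev : (fun t : ℝ => κ * (((1 + t * a) * (1 + t * -a) - ‖t • b‖ ^ 2) ^ γ *
      ∫ x, w x * (1 + ‖x‖ ^ 2) ^ (-(s + 2 * γ)) *
        (1 + t * quadRatio a b (-a) x) ^ (-(s + 2 * γ)))) =ᶠ[𝓝 0]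
      fun t => ∫ x, g x * (1 + ‖x‖ ^ 2) ^ (-s) * (1 + t * quadRatio a b (-a) x) ^ (-s) := by
    filter_upwards [eventually_abs_mul_le (|a| + ‖b‖ + |(-a)|)] with t ht
    have hcf := ((contDiff_quad_perturb_rpow ht (-(s + 2 * γ))).continuous.const_mul
      (((1 + t * a) * (1 + t * -a) - ‖t • b‖ ^ 2) ^ γ)).const_mul κ
    have key := integral_pairing (isLevyKernel_fracKer hn hγ0 hγ1)
      (contDiff_quad_perturb_rpow ht (-s)) (abs_quad_perturb_rpow_le ht hs.le)
      (h.quad_perturb ht) hcf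
      (Bf := |κ| * (|((1 + t * a) * (1 + t * -a) - ‖t • b‖ ^ 2) ^ γ| * (1 / 2) ^ (-(s + 2 * γ))))
      (fun x => by
        rw [abs_mul, abs_mul]
        gcongr
        exact abs_quad_perturb_rpow_le ht hs' x) hw hB hwi hpv hgi
    simp only [quad_perturb_rpow ht] at key
    simp only [mul_assoc]
    rw [← key, ← integral_const_mul, ← integral_const_mul]
    congr 1; ext x; ring
  have hd1 := ((hasDerivAt_discr_rpow a b (-a) γ).mul (hasDerivAt_integral_one_add_rpow
    (hψ hwi hs') hu.measurable hR (-(s + 2 * γ)))).const_mul κ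
  have hd2 := hasDerivAt_integral_one_add_rpow (hψ hgi hs.le) hu.measurable hR (-s)
  have heq := (hd1.congr_of_eventuallyEq hev.symm).unique hd2
  simp only [add_neg_cancel, mul_zero, zero_mul, zero_add, zero_smul, norm_zero, add_zero, mul_one,
    ne_eq, OfNat.ofNat_ne_zero, not_false_eq_true, zero_pow, sub_zero, Real.one_rpow, one_mul]
    at heq
  have e1 : ∀ x, w x * (p * κ * (1 + ‖x‖ ^ 2) ^ (-(2 * γ)) *
      ((1 + ‖x‖ ^ 2) ^ (-s) * quadRatio a b (-a) x)) =
      p * κ * (w x * (1 + ‖x‖ ^ 2) ^ (-(s + 2 * γ)) * quadRatio a b (-a) x) := fun x => by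
    rw [neg_add, Real.rpow_add (one_add_norm_sq_pos x)]; ring
  simp only [e1, ← mul_assoc (g _)]
  rw [integral_const_mul]
  apply mul_left_cancel₀ hs.ne'
  linear_combination κ * (∫ x, w x * (1 + ‖x‖ ^ 2) ^ (-(s + 2 * γ)) * quadRatio a b (-a) x) * hps -
    heq

end Kernel

section MomentVanishing

variable {n : ℕ} {γ s κ p : ℝ}

lemma eventually_integrable_one_add_norm_sq_rpow_mul (hs : (n : ℝ) < 2 * (s + 1)) {f : ℝ → ℝ}
    {j : ℕ} (hf : f =O[𝓝 0] fun y => y ^ j) {a c M : ℝ} {b : EuclideanSpace ℝ (Fin n)}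
    (hM : ∀ x, |quadRatio a b c x| ^ j ≤ M * (1 + ‖x‖ ^ 2)⁻¹)
    (hc : ∀ y, |y| ≤ 1 / 2 → ContinuousAt f y) :
    ∀ᶠ t in 𝓝 (0 : ℝ), Integrable fun x => (1 + ‖x‖ ^ 2) ^ (-s) * f (t * quadRatio a b c x) := by
  obtain ⟨C, hC⟩ := hf.bound
  obtain ⟨δ, hδ, hC⟩ := Metric.eventually_nhds_iff.1 hC
  have hsmall : ∀ᶠ t : ℝ in 𝓝 0, |t| * (|a| + ‖b‖ + |c|) < δ := by
    have h : Continuous fun t : ℝ => |t| * (|a| + ‖b‖ + |c|) := by fun_prop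
    exact (h.tendsto' 0 0 (by simp)).eventually_lt_const hδ
  filter_upwards [hsmall, eventually_abs_mul_le (|a| + ‖b‖ + |c|)] with t ht ht'
  have hfc : Continuous fun x => f (t * quadRatio a b c x) :=
    continuous_iff_continuousAt.2 fun x =>
      ContinuousAt.comp (f := fun x => t * quadRatio a b c x) (hc _ (abs_mul_quadRatio_le ht' x))
        (continuous_const.mul (continuous_quadRatio a b c)).continuousAt
  refine integrable_of_abs_le_one_add_norm_sq_rpow (r := s + 1) (C := |C| * |t| ^ j * M)
    ((continuous_one_add_norm_sq_rpow _).mul hfc) hs fun x => ?_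
  have hpos := one_add_norm_sq_pos x
  have h1 : |f (t * quadRatio a b c x)| ≤ |C| * |t| ^ j * (M * (1 + ‖x‖ ^ 2)⁻¹) := by
    have hx : dist (t * quadRatio a b c x) 0 < δ := by
      rw [dist_zero_right, Real.norm_eq_abs, abs_mul]
      exact (mul_le_mul_of_nonneg_left (abs_quadRatio_le a b c x) (abs_nonneg t)).trans_lt ht
    refine (hC hx).trans ?_
    rw [norm_pow, norm_mul, mul_pow, mul_assoc |C|, Real.norm_eq_abs, Real.norm_eq_abs]
    refine mul_le_mul (le_abs_self C) ?_ (by positivity) (abs_nonneg C)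
    exact mul_le_mul_of_nonneg_left (hM x) (by positivity)
  rw [abs_mul, abs_of_nonneg (Real.rpow_nonneg hpos.le _), neg_add, Real.rpow_add hpos,
    Real.rpow_neg_one]
  refine (mul_le_mul_of_nonneg_left h1 (Real.rpow_nonneg hpos.le _)).trans_eq ?_
  ring

lemma quadRatio_sq_le (b : EuclideanSpace ℝ (Fin n)) (c : ℝ) (x : EuclideanSpace ℝ (Fin n)) :
    |quadRatio 0 b c x| ^ 2 ≤ (4 * ‖b‖ ^ 2 + c ^ 2) * (1 + ‖x‖ ^ 2)⁻¹ := by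
  have hpos := one_add_norm_sq_pos x
  rw [quadRatio, sq_abs, div_pow, div_le_iff₀ (by positivity), quad]
  have h1 : (inner ℝ b x) ^ 2 ≤ ‖b‖ ^ 2 * ‖x‖ ^ 2 := by
    rw [← mul_pow, ← sq_abs]
    exact pow_le_pow_left₀ (abs_nonneg _) (abs_real_inner_le_norm b x) 2
  have h2 : (4 * ‖b‖ ^ 2 + c ^ 2) * (1 + ‖x‖ ^ 2)⁻¹ * (1 + ‖x‖ ^ 2) ^ 2 =
      (4 * ‖b‖ ^ 2 + c ^ 2) * (1 + ‖x‖ ^ 2) := by field_simp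
  have h3 : 4 * c * inner ℝ b x ≤ 4 * ‖b‖ ^ 2 + c ^ 2 * ‖x‖ ^ 2 := by
    have h4 : c * inner ℝ b x ≤ ‖b‖ * (|c| * ‖x‖) := by
      refine (le_abs_self _).trans ?_
      rw [abs_mul]
      nlinarith [mul_le_mul_of_nonneg_left (abs_real_inner_le_norm b x) (abs_nonneg c)]
    have h5 : (|c| * ‖x‖) ^ 2 = c ^ 2 * ‖x‖ ^ 2 := by rw [mul_pow, sq_abs]
    nlinarith [sq_nonneg (2 * ‖b‖ - |c| * ‖x‖)]
  rw [h2]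
  nlinarith

lemma continuousAt_one_add_mul_rpow {d y : ℝ} (hd : |d| ≤ 1) (hy : |y| ≤ 1 / 2) (r : ℝ) :
    ContinuousAt (fun y : ℝ => (1 + d * y) ^ r) y := by
  refine ContinuousAt.rpow_const (by fun_prop) (Or.inl ?_)
  have : |d * y| ≤ 1 * (1 / 2) := by
    rw [abs_mul]; exact mul_le_mul hd hy (abs_nonneg _) zero_le_one
  linarith [(abs_le.1 this).1]

lemma isBigO_second_difference (r : ℝ) :
    (fun y : ℝ => (1 + y) ^ r + (-2) * (1 + 1 / 2 * y) ^ r + 1) =O[𝓝 0] fun y => y ^ 2 := by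
  have h1 := isBigO_one_add_rpow_sub r 2
  have hhalf : Tendsto (fun t : ℝ => 1 / 2 * t) (𝓝 0) (𝓝 0) :=
    (continuous_const_mul (1 / 2 : ℝ)).tendsto' 0 0 (by simp)
  have h2 := h1.comp_tendsto hhalf
  have h3 : ((fun y : ℝ => y ^ 2) ∘ fun t : ℝ => 1 / 2 * t) =O[𝓝 0] fun y => y ^ 2 := by
    simp only [Function.comp_def, mul_pow]
    exact (Asymptotics.isBigO_refl _ _).const_mul_left _
  refine (h1.sub ((h2.trans h3).const_mul_left 2)).congr_left fun y => ?_
  simp [Finset.sum_range_succ]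
  ring

lemma bubbleDefect_zero (γ s p : ℝ) (φ : EuclideanSpace ℝ (Fin n) → ℝ) (a : ℝ)
    (b : EuclideanSpace ℝ (Fin n)) (c : ℝ) :
    bubbleDefect γ s p φ a b c 0 = (1 - p) * ∫ x, φ x * (1 + ‖x‖ ^ 2) ^ (-(s + 2 * γ)) := by
  simp [bubbleDefect, sub_mul]

lemma IsWeakSol.integral_eq_zero (hn : 1 ≤ n) (hγ0 : 0 < γ) (hγ1 : γ < 1) (hs : 0 < s)
    (hsn : 2 * s = n - 2 * γ) (hps : p * s = s + 2 * γ) (hκ : κ ≠ 0)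
    (h : HasPV n γ (fun x => (1 + ‖x‖ ^ 2) ^ (-s)) (fun x => κ * (1 + ‖x‖ ^ 2) ^ (-(s + 2 * γ))))
    {φ : EuclideanSpace ℝ (Fin n) → ℝ} (hφ : Continuous φ) {B : ℝ} (hB : ∀ x, |φ x| ≤ B)
    (hw : IsWeakSol n γ (fun x => p * κ * (1 + ‖x‖ ^ 2) ^ (-(2 * γ))) φ) :
    ∫ x, φ x * (1 + ‖x‖ ^ 2) ^ (-(s + 2 * γ)) = 0 := by
  have hψ := integrable_mul_one_add_norm_sq_rpow (r := s + 2 * γ) hφ hB (by linarith)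
  have hu := (continuous_quadRatio (0 : ℝ) (0 : EuclideanSpace ℝ (Fin n)) 1).measurable
  have hR := abs_quadRatio_le (0 : ℝ) (0 : EuclideanSpace ℝ (Fin n)) 1
  have hint := eventually_integrable_one_add_norm_sq_rpow_mul (n := n) (s := s) (by linarith)
    (f := fun y => (1 + y) ^ (-s) - 1) (j := 1) (a := 0) (b := 0) (c := 1) (M := 1)
    (by simpa using isBigO_one_add_rpow_sub (-s) 1)
    (fun x => by
      rw [pow_one, quadRatio, quad, abs_of_nonneg (by simp; positivity)]
      simp)
    (fun y hy => by
      have := (continuousAt_one_add_mul_rpow (d := 1) (by simp) hy (-s)).sub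
        (continuousAt_const (y := (1 : ℝ)))
      simpa only [one_mul, Pi.sub_def] using this)
  have hconst : bubbleDefect γ s p φ 0 0 1 =ᶠ[𝓝 0] fun _ => bubbleDefect γ s p φ 0 0 1 0 := by
    filter_upwards [hint, eventually_abs_mul_le
      (|(0 : ℝ)| + ‖(0 : EuclideanSpace ℝ (Fin n))‖ + |(1 : ℝ)|)] with t hti ht
    have := hw.bubbleDefect_combination hn hγ0 hγ1 hs hsn hκ h hφ hB ht 0 (-1)
      (by simpa [sub_eq_add_neg] using hti)
    linarith
  have hd : HasDerivAt (bubbleDefect γ s p φ 0 0 1) _ 0 :=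
    ((hasDerivAt_discr_rpow 0 (0 : EuclideanSpace ℝ (Fin n)) 1 γ).mul
      (hasDerivAt_integral_one_add_rpow hψ hu hR (-(s + 2 * γ)))).sub
      ((hasDerivAt_integral_one_add_rpow hψ hu hR (-s)).const_mul p)
  have heq := hd.unique ((hasDerivAt_const (0 : ℝ) _).congr_of_eventuallyEq hconst)
  simp [-neg_add_rev] at heq
  have : γ * ∫ x, φ x * (1 + ‖x‖ ^ 2) ^ (-(s + 2 * γ)) = 0 := by
    linear_combination heq - (∫ x, φ x * (1 + ‖x‖ ^ 2) ^ (-(s + 2 * γ)) *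
      quadRatio 0 0 1 x) * hps
  exact (mul_eq_zero.1 this).resolve_left hγ0.ne'

/-- A weak solution whose first moments vanish has vanishing moments of all orders. -/
lemma IsWeakSol.integral_mul_pow_eq_zero (hn : 1 ≤ n) (hγ0 : 0 < γ) (hγ1 : γ < 1) (hs : 0 < s)
    (hsn : 2 * s = n - 2 * γ) (hps : p * s = s + 2 * γ) (hκ : κ ≠ 0)
    (h : HasPV n γ (fun x => (1 + ‖x‖ ^ 2) ^ (-s)) (fun x => κ * (1 + ‖x‖ ^ 2) ^ (-(s + 2 * γ))))
    {φ : EuclideanSpace ℝ (Fin n) → ℝ} (hφ : Continuous φ) {B : ℝ} (hB : ∀ x, |φ x| ≤ B)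
    (hw : IsWeakSol n γ (fun x => p * κ * (1 + ‖x‖ ^ 2) ^ (-(2 * γ))) φ)
    (b : EuclideanSpace ℝ (Fin n)) (c : ℝ)
    (h1 : ∫ x, φ x * (1 + ‖x‖ ^ 2) ^ (-(s + 2 * γ)) * quadRatio 0 b c x = 0) (k : ℕ) :
    ∫ x, φ x * (1 + ‖x‖ ^ 2) ^ (-(s + 2 * γ)) * quadRatio 0 b c x ^ k = 0 := by
  have h0 := hw.integral_eq_zero hn hγ0 hγ1 hs hsn hps hκ h hφ hB
  induction k using Nat.strong_induction_on with
  | _ k ih =>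
  rcases k with _ | _ | k
  · simpa using h0
  · simpa using h1
  set m := k + 2 with hm
  have hψ := integrable_mul_one_add_norm_sq_rpow (r := s + 2 * γ) hφ hB (by linarith)
  have hu := (continuous_quadRatio (0 : ℝ) b c).measurable
  have hR := abs_quadRatio_le (0 : ℝ) b c
  have hA := isBigO_integral_one_add_rpow_sub_of_moments hψ hu hR (-(s + 2 * γ)) ih
  have hB' := isBigO_integral_one_add_rpow_sub_of_moments hψ hu hR (-s) ih
  set I := ∫ x, φ x * (1 + ‖x‖ ^ 2) ^ (-(s + 2 * γ)) * quadRatio 0 b c x ^ m with hI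
  have hD := hasDerivAt_discr_rpow 0 b c γ
  have hD1 : (fun t : ℝ => ((1 + t * 0) * (1 + t * c) - ‖t • b‖ ^ 2) ^ γ - 1) =O[𝓝 0]
      fun t => t := by simpa using hD.isBigO_sub
  have hD0 : (fun t : ℝ => ((1 + t * 0) * (1 + t * c) - ‖t • b‖ ^ 2) ^ γ) =O[𝓝 0]
      fun _ => (1 : ℝ) := hD.continuousAt.isBigO_one ℝ
  have hF : (fun t => bubbleDefect γ s p φ 0 b c t -
      ((Ring.choose (-(s + 2 * γ)) m - p * Ring.choose (-s) m) * I) * t ^ m) =O[𝓝 0]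
      fun t => t ^ (m + 1) := by
    have e1 := (hD0.mul hA).congr_right fun t => one_mul _
    have e2 := (hD1.mul (Asymptotics.isBigO_refl (fun t : ℝ => t ^ m) (𝓝 0))).const_mul_left
      (Ring.choose (-(s + 2 * γ)) m * I)
    have e2' := e2.congr_right fun t : ℝ => (pow_succ' t m).symm
    refine ((e1.add e2').sub (hB'.const_mul_left p)).congr_left fun t => ?_
    simp only [bubbleDefect]
    ring
  have hint := eventually_integrable_one_add_norm_sq_rpow_mul (n := n) (s := s) (by linarith)
    (isBigO_second_difference (-s)) (quadRatio_sq_le b c)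
    (fun y hy => by
      have := ((continuousAt_one_add_mul_rpow (d := 1) (by simp) hy (-s)).add
        ((continuousAt_one_add_mul_rpow (d := 1 / 2) (by norm_num [abs_of_pos]) hy
          (-s)).const_mul (-2))).add_const 1
      simpa using this)
  have hhalf : ∀ᶠ t in 𝓝 0, bubbleDefect γ s p φ 0 b c t =
      2 * bubbleDefect γ s p φ 0 b c (t / 2) := by
    filter_upwards [hint, eventually_abs_mul_le (|(0 : ℝ)| + ‖b‖ + |c|)] with t hti ht
    have := hw.bubbleDefect_combination hn hγ0 hγ1 hs hsn hκ h hφ hB ht (-2) 1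
      (hti.congr (ae_of_all _ fun x => by
        beta_reduce
        rw [show 1 / 2 * (t * quadRatio 0 b c x) = t / 2 * quadRatio 0 b c x by ring]))
    rw [bubbleDefect_zero, h0] at this
    linarith
  refine (mul_eq_zero.1 (eq_zero_of_isBigO_of_eq_two_mul_half (by omega) hF hhalf)).resolve_left
    fun hzero => Ring.mul_choose_neg_ne hs (show s < s + 2 * γ by linarith) (k := m) (by omega) ?_
  rw [← hps] at hzero ⊢
  linear_combination s * hzero

lemma IsWeakSol.eq_zero (hn : 1 ≤ n) (hγ0 : 0 < γ) (hγ1 : γ < 1) (hs : 0 < s)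
    (hsn : 2 * s = n - 2 * γ) (hps : p * s = s + 2 * γ) (hκ : κ ≠ 0)
    (h : HasPV n γ (fun x => (1 + ‖x‖ ^ 2) ^ (-s)) (fun x => κ * (1 + ‖x‖ ^ 2) ^ (-(s + 2 * γ))))
    {φ : EuclideanSpace ℝ (Fin n) → ℝ} (hφ : Continuous φ) {B : ℝ} (hB : ∀ x, |φ x| ≤ B)
    (hw : IsWeakSol n γ (fun x => p * κ * (1 + ‖x‖ ^ 2) ^ (-(2 * γ))) φ)
    (h1 : ∀ b c, ∫ x, φ x * (1 + ‖x‖ ^ 2) ^ (-(s + 2 * γ)) * quadRatio 0 b c x = 0) : φ = 0 := by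
  have hψ := eq_zero_of_moments (hφ.mul (continuous_one_add_norm_sq_rpow (-(s + 2 * γ))))
    (integrable_mul_one_add_norm_sq_rpow hφ hB (by linarith))
    fun b c k => hw.integral_mul_pow_eq_zero hn hγ0 hγ1 hs hsn hps hκ h hφ hB b c (h1 b c) k
  ext x
  exact (mul_eq_zero.1 (congrFun hψ x)).resolve_right
    (Real.rpow_pos_of_pos (one_add_norm_sq_pos x) _).ne'

end MomentVanishing

section Classification

variable {n : ℕ} {γ s κ p : ℝ}

lemma quadRatio_add (a a' : ℝ) (b b' : EuclideanSpace ℝ (Fin n)) (c c' : ℝ)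
    (x : EuclideanSpace ℝ (Fin n)) :
    quadRatio (a + a') (b + b') (c + c') x = quadRatio a b c x + quadRatio a' b' c' x := by
  simp only [quadRatio, quad, inner_add_left]
  ring

lemma quadRatio_smul (r a : ℝ) (b : EuclideanSpace ℝ (Fin n)) (c : ℝ)
    (x : EuclideanSpace ℝ (Fin n)) :
    quadRatio (r * a) (r • b) (r * c) x = r * quadRatio a b c x := by
  simp only [quadRatio, quad, real_inner_smul_left]
  ring

lemma integrable_mul_quadRatio {ψ : EuclideanSpace ℝ (Fin n) → ℝ} (hψ : Integrable ψ) (a : ℝ)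
    (b : EuclideanSpace ℝ (Fin n)) (c : ℝ) : Integrable fun x => ψ x * quadRatio a b c x :=
  hψ.mul_bdd (continuous_quadRatio a b c).aestronglyMeasurable
    (ae_of_all _ (abs_quadRatio_le a b c))

/-- The first moments of `ψ` with respect to the functions `(2⟨b,x⟩ + c) / (1 + |x|²)`. -/
noncomputable def firstMoments (ψ : EuclideanSpace ℝ (Fin n) → ℝ) (hψ : Integrable ψ) :
    Module.Dual ℝ (EuclideanSpace ℝ (Fin n) × ℝ) where
  toFun q := ∫ x, ψ x * quadRatio 0 q.1 q.2 x
  map_add' q q' := by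
    rw [← integral_add (integrable_mul_quadRatio hψ _ _ _) (integrable_mul_quadRatio hψ _ _ _)]
    simp only [← mul_add, ← quadRatio_add, add_zero, Prod.fst_add, Prod.snd_add]
  map_smul' r q := by
    rw [RingHom.id_apply, smul_eq_mul, ← integral_const_mul]
    congr 1; ext x
    rw [mul_left_comm, ← quadRatio_smul r, mul_zero, Prod.smul_fst, Prod.smul_snd, smul_eq_mul]

lemma continuous_rpow_mul_quadRatio (s a : ℝ) (b : EuclideanSpace ℝ (Fin n)) :
    Continuous fun x => (1 + ‖x‖ ^ 2) ^ (-s) * quadRatio a b (-a) x :=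
  (continuous_one_add_norm_sq_rpow _).mul (continuous_quadRatio a b (-a))

lemma abs_rpow_mul_quadRatio_le (hs : 0 ≤ s) (a : ℝ) (b x : EuclideanSpace ℝ (Fin n)) :
    |(1 + ‖x‖ ^ 2) ^ (-s) * quadRatio a b (-a) x| ≤ 1 * (|a| + ‖b‖ + |(-a)|) := by
  rw [abs_mul]
  exact mul_le_mul (one_add_norm_sq_rpow_le_one hs x) (abs_quadRatio_le a b _ x)
    (abs_nonneg _) zero_le_one

lemma integrable_mul_quadRatio_mul_rpow (hs' : (n : ℝ) < 2 * (s + 2 * γ)) (hs : 0 ≤ s) (a : ℝ)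
    (b : EuclideanSpace ℝ (Fin n)) : Integrable fun x : EuclideanSpace ℝ (Fin n) =>
      (1 + ‖x‖ ^ 2) ^ (-s) * quadRatio a b (-a) x * (1 + ‖x‖ ^ 2) ^ (-(s + 2 * γ)) :=
  integrable_mul_one_add_norm_sq_rpow (continuous_rpow_mul_quadRatio s a b)
    (abs_rpow_mul_quadRatio_le hs a b) hs'

/-- The first moments of the explicit kernel elements. -/
noncomputable def kernelMoments (hs' : (n : ℝ) < 2 * (s + 2 * γ)) (hs : 0 ≤ s) :
    EuclideanSpace ℝ (Fin n) × ℝ →ₗ[ℝ] Module.Dual ℝ (EuclideanSpace ℝ (Fin n) × ℝ) where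
  toFun q := firstMoments _ (integrable_mul_quadRatio_mul_rpow (γ := γ) hs' hs q.2 q.1)
  map_add' q q' := by
    refine LinearMap.ext fun r => ?_
    simp only [firstMoments, LinearMap.add_apply, LinearMap.coe_mk, AddHom.coe_mk]
    rw [← integral_add]
    · congr 1; ext x
      rw [Prod.fst_add, Prod.snd_add, neg_add, quadRatio_add]; ring
    all_goals exact integrable_mul_quadRatio (integrable_mul_quadRatio_mul_rpow hs' hs _ _) _ _ _
  map_smul' t q := by
    refine LinearMap.ext fun r => ?_
    simp only [firstMoments, LinearMap.smul_apply, LinearMap.coe_mk, AddHom.coe_mk,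
      RingHom.id_apply, smul_eq_mul]
    rw [← integral_const_mul]
    congr 1; ext x
    rw [Prod.smul_fst, Prod.smul_snd, smul_eq_mul, ← mul_neg, quadRatio_smul]; ring

/-- Every bounded weak solution is one of the explicit kernel elements. -/
lemma IsWeakSol.exists_eq (hn : 1 ≤ n) (hγ0 : 0 < γ) (hγ1 : γ < 1) (hs : 0 < s)
    (hsn : 2 * s = n - 2 * γ) (hps : p * s = s + 2 * γ) (hκ : κ ≠ 0)
    (h : HasPV n γ (fun x => (1 + ‖x‖ ^ 2) ^ (-s)) (fun x => κ * (1 + ‖x‖ ^ 2) ^ (-(s + 2 * γ))))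
    {φ : EuclideanSpace ℝ (Fin n) → ℝ} (hφ : Continuous φ) {B : ℝ} (hB : ∀ x, |φ x| ≤ B)
    (hw : IsWeakSol n γ (fun x => p * κ * (1 + ‖x‖ ^ 2) ^ (-(2 * γ))) φ) :
    ∃ (a : ℝ) (b : EuclideanSpace ℝ (Fin n)),
      ∀ x, φ x = (1 + ‖x‖ ^ 2) ^ (-s) * quadRatio a b (-a) x := by
  have hs' : (n : ℝ) < 2 * (s + 2 * γ) := by linarith
  have hKc := continuous_rpow_mul_quadRatio (n := n) s
  have hKB := abs_rpow_mul_quadRatio_le (n := n) hs.le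
  have hinj : Function.Injective (kernelMoments (γ := γ) hs' hs.le) := by
    refine (injective_iff_map_eq_zero _).2 fun ⟨b, a⟩ hq => ?_
    have hK := (isWeakSol_kernel hn hγ0 hγ1 hs hps h a b).eq_zero hn hγ0 hγ1 hs hsn hps hκ h
      (hKc a b) (hKB a b) fun b' c' => LinearMap.congr_fun hq (b', c')
    have hquad (x : EuclideanSpace ℝ (Fin n)) : quad a b (-a) x = 0 := by
      have hx := (mul_eq_zero.1 (congrFun hK x)).resolve_left
        (Real.rpow_pos_of_pos (one_add_norm_sq_pos x) _).ne'
      exact (div_eq_zero_iff.1 hx).resolve_right (one_add_norm_sq_pos x).ne'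
    have ha : a = 0 := by simpa [quad] using hquad 0
    have hb : b = 0 := by simpa [quad, ha] using hquad b
    rw [ha, hb, Prod.mk_zero_zero]
  have hsurj : Function.Surjective (kernelMoments (γ := γ) hs' hs.le) :=
    (LinearMap.injective_iff_surjective_of_finrank_eq_finrank
      Subspace.dual_finrank_eq.symm).1 hinj
  have hψ := integrable_mul_one_add_norm_sq_rpow hφ hB hs'
  obtain ⟨⟨b, a⟩, hq⟩ := hsurj (firstMoments _ hψ)
  have hdiff := hw.sub (isWeakSol_kernel hn hγ0 hγ1 hs hps h a b)
    (continuous_const.mul (continuous_one_add_norm_sq_rpow _)) hφ (hKc a b)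
    (BV := |p * κ| * 1) (fun x => by
      rw [abs_mul]
      exact mul_le_mul_of_nonneg_left (one_add_norm_sq_rpow_le_one (by linarith) x) (abs_nonneg _))
    hB (hKB a b)
  refine ⟨a, b, fun x => sub_eq_zero.1 (congrFun (hdiff.eq_zero hn hγ0 hγ1 hs hsn hps hκ h
    (hφ.sub (hKc a b)) (fun x => (abs_sub _ _).trans (add_le_add (hB x) (hKB a b x)))
    fun b' c' => ?_) x)⟩
  have := LinearMap.congr_fun hq (b', c')
  simp only [kernelMoments, firstMoments, LinearMap.coe_mk, AddHom.coe_mk] at this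
  simp only [Pi.sub_apply, sub_mul]
  rw [integral_sub (integrable_mul_quadRatio hψ _ _ _) (integrable_mul_quadRatio
    (integrable_mul_quadRatio_mul_rpow hs' hs.le a b) _ _ _), this, sub_self]

end Classification

section Bubbles

variable {n : ℕ} {γ α μ s : ℝ}

lemma fracLapConst_pos (n : ℕ) (hγ0 : 0 < γ) (hγ1 : γ < 1) : 0 < fracLapConst n γ := by
  have h1 : 0 < Real.Gamma ((n : ℝ) / 2 + γ) := Real.Gamma_pos_of_pos (by positivity)
  have h2 : Real.Gamma (-γ) ≠ 0 := Real.Gamma_ne_zero fun m hm => by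
    have hm' : γ = m := neg_injective hm
    rw [hm'] at hγ0 hγ1
    have : 0 < m := by exact_mod_cast hγ0
    have : m < 1 := by exact_mod_cast hγ1
    omega
  unfold fracLapConst
  positivity

/-- If `C` times the principal value of `φ` is `f`, then `φ` has principal value `f / C`. -/
lemma hasPV_of_forall_exists {φ f : EuclideanSpace ℝ (Fin n) → ℝ} {C : ℝ} (hC : C ≠ 0)
    (h : ∀ x, ∃ L, Tendsto (pvInt n γ φ x) (𝓝[>] 0) (𝓝 L) ∧ C * L = f x) :
    HasPV n γ φ fun x => C⁻¹ * f x := fun x => by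
  obtain ⟨L, hL, hCL⟩ := h x
  beta_reduce
  rw [← hCL, inv_mul_cancel_left₀ hC]
  exact hL.congr fun ε => pvInt_eq_truncOp φ x ε

lemma zBubble_smul (n : ℕ) (γ α : ℝ) (hμ : 0 < μ) (ξ y : EuclideanSpace ℝ (Fin n)) :
    zBubble n γ α μ ξ (μ • (y - (-μ⁻¹) • ξ)) =
      α * (μ⁻¹ * (1 + ‖y‖ ^ 2)⁻¹) ^ (((n : ℝ) - 2 * γ) / 2) := by
  have h : μ • (y - (-μ⁻¹) • ξ) - ξ = μ • y := by
    rw [smul_sub, smul_smul, mul_neg, mul_inv_cancel₀ hμ.ne', neg_smul, one_smul]; abel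
  rw [zBubble, h, norm_smul, mul_pow, Real.norm_eq_abs, sq_abs]
  congr 2
  have := one_add_norm_sq_pos y
  field_simp

lemma hasDerivAt_zBubble (n : ℕ) (γ α : ℝ) (hμ : 0 < μ) (ξ x : EuclideanSpace ℝ (Fin n))
    (hs : s = ((n : ℝ) - 2 * γ) / 2) :
    HasDerivAt (fun t => zBubble n γ α t ξ x)
      (α * s * (μ / (μ ^ 2 + ‖x - ξ‖ ^ 2)) ^ s * ((‖x - ξ‖ ^ 2 - μ ^ 2) /
        (μ * (μ ^ 2 + ‖x - ξ‖ ^ 2)))) μ := by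
  have hD : 0 < μ ^ 2 + ‖x - ξ‖ ^ 2 := by positivity
  have h := (((hasDerivAt_id' μ).fun_div (((hasDerivAt_id' μ).fun_pow 2).add_const (‖x - ξ‖ ^ 2))
    hD.ne').rpow_const (p := s) (Or.inl (by positivity))).const_mul α
  simp only [zBubble, ← hs]
  refine h.congr_deriv ?_
  rw [Real.rpow_sub_one (by positivity)]
  field_simp
  push_cast
  ring

lemma fderiv_zBubble (n : ℕ) (γ α : ℝ) (hμ : 0 < μ) (ξ x v : EuclideanSpace ℝ (Fin n))
    (hs : s = ((n : ℝ) - 2 * γ) / 2) :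
    fderiv ℝ (fun ζ => zBubble n γ α μ ζ x) ξ v =
      α * s * (μ / (μ ^ 2 + ‖x - ξ‖ ^ 2)) ^ s * (2 * inner ℝ (x - ξ) v /
        (μ ^ 2 + ‖x - ξ‖ ^ 2)) := by
  have hD : 0 < μ ^ 2 + ‖x - ξ‖ ^ 2 := by positivity
  have h1 : HasDerivAt (fun r : ℝ => α * (μ / (μ ^ 2 + r)) ^ s) _ (‖x - ξ‖ ^ 2) :=
    (((hasDerivAt_const _ μ).fun_div ((hasDerivAt_id' _).const_add (μ ^ 2))
      hD.ne').rpow_const (p := s) (Or.inl (by positivity))).const_mul α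
  have h2 := ((hasFDerivAt_id ξ).const_sub x).norm_sq
  simp only [zBubble, ← hs]
  have h3 := h1.comp_hasFDerivAt ξ h2
  simp only [Function.comp_def, id_eq] at h3
  rw [h3.fderiv, Real.rpow_sub_one (by positivity)]
  simp
  field_simp
  rw [inner_sub_left]
  ring

end Bubbles

theorem stmt15 (n : ℕ) (hn : 1 ≤ n) (γ : ℝ) (hγ0 : 0 < γ) (hγ1 : γ < 1)
    (hγn : γ < (n : ℝ) / 2)
    (p : ℝ) (hp : p = ((n : ℝ) + 2 * γ) / ((n : ℝ) - 2 * γ))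
    (α : ℝ) (hα : 0 < α)
    -- `z₀` solves `(-Δ)^γ z₀ = z₀^p` pointwise (the principal value exists at every
    -- point and `C(n,γ)` times its limit is `z₀(x)^p`):
    (hz0 : ∀ x : EuclideanSpace ℝ (Fin n), ∃ L : ℝ,
      Tendsto (pvInt n γ (z0 n γ α) x) (𝓝[>] 0) (𝓝 L) ∧
      fracLapConst n γ * L = z0 n γ α x ^ p)
    (μ : ℝ) (hμ : 0 < μ) (ξ : EuclideanSpace ℝ (Fin n))
    (φ : EuclideanSpace ℝ (Fin n) → ℝ) (hφsmooth : ContDiff ℝ (⊤ : ℕ∞) φ)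
    (hφbdd : ∃ C, ∀ x, |φ x| ≤ C)
    -- `φ` solves the linearized equation `(-Δ)^γ φ = p z_{μ,ξ}^{p-1} φ` pointwise,
    -- with the principal value defining `(-Δ)^γ φ(x)` existing for every `x`:
    (hφeq : ∀ x : EuclideanSpace ℝ (Fin n), ∃ L : ℝ,
      Tendsto (pvInt n γ φ x) (𝓝[>] 0) (𝓝 L) ∧
      fracLapConst n γ * L = p * zBubble n γ α μ ξ x ^ (p - 1) * φ x) :
    ∃ (c₀ : ℝ) (c : Fin n → ℝ), ∀ x : EuclideanSpace ℝ (Fin n),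
      φ x = c₀ * deriv (fun t => zBubble n γ α t ξ x) μ +
        ∑ i : Fin n, c i *
          fderiv ℝ (fun ζ => zBubble n γ α μ ζ x) ξ (EuclideanSpace.single i (1 : ℝ)) := by
  set s := ((n : ℝ) - 2 * γ) / 2 with hsdef
  have hs : 0 < s := by rw [hsdef]; linarith
  have hsn : 2 * s = n - 2 * γ := by rw [hsdef]; ring
  have hps : p * s = s + 2 * γ := by
    have : (n : ℝ) - 2 * γ ≠ 0 := by linarith
    rw [hp, hsdef]; field_simp; ring
  have hC := fracLapConst_pos n hγ0 hγ1
  set κ := (fracLapConst n γ)⁻¹ * α ^ (p - 1) with hκdef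
  have hκ : κ ≠ 0 := by positivity
  have hQ := one_add_norm_sq_pos (n := n)
  have h : HasPV n γ (fun x => (1 + ‖x‖ ^ 2) ^ (-s))
      (fun x => κ * (1 + ‖x‖ ^ 2) ^ (-(s + 2 * γ))) := by
    convert (hasPV_of_forall_exists hC.ne' hz0).const_mul α⁻¹ using 2 with x x
    · rw [z0, inv_mul_cancel_left₀ hα.ne']
    · rw [z0, Real.mul_rpow hα.le (Real.rpow_nonneg (hQ x).le _), ← Real.rpow_mul (hQ x).le,
        ← hsdef, neg_mul, mul_comm s, hps, hκdef, Real.rpow_sub_one hα.ne']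
      ring
  have hφ' := (hasPV_of_forall_exists hC.ne' hφeq).comp_affine hμ ((-μ⁻¹) • ξ)
  obtain ⟨B, hB⟩ := hφbdd
  set ψ : EuclideanSpace ℝ (Fin n) → ℝ := fun y => φ (μ • (y - (-μ⁻¹) • ξ)) with hψdef
  have hψ : ContDiff ℝ 2 ψ := (hφsmooth.of_le (WithTop.coe_le_coe.2 (le_top (a := (2 : ℕ∞))))).comp
    (by fun_prop)
  have hV : HasPV n γ ψ fun y => p * κ * (1 + ‖y‖ ^ 2) ^ (-(2 * γ)) * ψ y := by
    convert hφ' using 2 with y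
    rw [zBubble_smul n γ α hμ, ← hsdef, Real.mul_rpow hα.le (by have := hQ y; positivity),
      ← Real.rpow_mul (by have := hQ y; positivity), show s * (p - 1) = 2 * γ by linarith,
      Real.mul_rpow (by positivity) (by have := hQ y; positivity), Real.inv_rpow hμ.le,
      Real.inv_rpow (hQ y).le, Real.rpow_neg (hQ y).le, hκdef]
    change _ = _ * (_ * (_ * ψ y))
    field_simp
  have hw : IsWeakSol n γ (fun x => p * κ * (1 + ‖x‖ ^ 2) ^ (-(2 * γ))) ψ :=
    fun w g hw ⟨_, hBw⟩ hwi hpv hgi => integral_pairing (isLevyKernel_fracKer hn hγ0 hγ1) hψ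
      (fun _ => hB _) hV
      ((continuous_const.mul (continuous_one_add_norm_sq_rpow _)).mul hψ.continuous)
      (Bf := |p * κ| * 1 * B) (fun x => by
        rw [abs_mul, abs_mul]
        exact mul_le_mul (mul_le_mul_of_nonneg_left
          (one_add_norm_sq_rpow_le_one (by linarith) x) (abs_nonneg _)) (hB _) (abs_nonneg _)
          (by positivity)) hw hBw hwi hpv hgi
  obtain ⟨a, b, hab⟩ := hw.exists_eq hn hγ0 hγ1 hs hsn hps hκ h hψ.continuous fun _ => hB _
  refine ⟨a * (μ ^ s * μ) / (α * s), fun i => b i * (μ ^ s * μ) / (α * s), fun x => ?_⟩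
  have hx : φ x = ψ (μ⁻¹ • (x - ξ)) := by
    rw [hψdef]
    congr 1
    rw [neg_smul, sub_neg_eq_add, ← smul_add, sub_add_cancel, smul_inv_smul₀ hμ.ne']
  have hD : 0 < μ ^ 2 + ‖x - ξ‖ ^ 2 := by positivity
  have hy : 1 + ‖μ⁻¹ • (x - ξ)‖ ^ 2 = (μ * (μ / (μ ^ 2 + ‖x - ξ‖ ^ 2)))⁻¹ := by
    rw [norm_smul, mul_pow, Real.norm_eq_abs, sq_abs]
    field_simp
  have hb : inner ℝ b (x - ξ) = ∑ i, b i * (x - ξ) i := by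
    rw [PiLp.inner_apply]
    exact Finset.sum_congr rfl fun i _ => mul_comm _ _
  have hsum : ∑ i, b i * (μ ^ s * μ) / (α * s) *
      fderiv ℝ (fun ζ => zBubble n γ α μ ζ x) ξ (EuclideanSpace.single i (1 : ℝ)) =
      (μ ^ s * μ) * (μ / (μ ^ 2 + ‖x - ξ‖ ^ 2)) ^ s *
        (2 * inner ℝ b (x - ξ) / (μ ^ 2 + ‖x - ξ‖ ^ 2)) := by
    rw [hb, Finset.mul_sum, Finset.sum_div, Finset.mul_sum]
    refine Finset.sum_congr rfl fun i _ => ?_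
    rw [fderiv_zBubble n γ α hμ ξ x _ hsdef, EuclideanSpace.inner_single_right]
    simp
    field_simp
  rw [hsum, (hasDerivAt_zBubble n γ α hμ ξ x hsdef).deriv, hx, hab, quadRatio, hy, quad,
    inner_smul_right, Real.inv_rpow (by positivity), Real.rpow_neg (by positivity), inv_inv,
    Real.mul_rpow hμ.le (by positivity), norm_smul, mul_pow, Real.norm_eq_abs, sq_abs]
  field_simp
  ring
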